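/- Let h ≥ 1 and k ≥ 1 be integers, let G be an edge-weighted K_h-minor-free graph, let P ⊆ V(G) be a nonempty set of clients and F ⊆ V(G) a set of potential centers, and let ε be a real with 0 < ε < 1. Set c = C(h−2+2·⌈36h/ε⌉, h−1)·(12+72/ε)·(h−1) (with C(·,·) the binomial coefficient) and Γ = 3(c+1)·[2k + c·(4 + 3/ε + 2k)]. Then there exists a subset S ⊆ P with |S| ≤ k + (9/ε³)·(2c·(Γk+2)·(3/ε+2)^c)^(c+1) such that for every nonempty set X ⊆ F with |X| ≤ k it holds that max_{p∈P} dist_G(p,X) ≤ (1+ε) · max_{p∈S} dist_G(p,X). -/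

import Mathlib

open scoped ENNReal

namespace ScatterDim

variable {V : Type}





/-- Total weight of a walk in an edge-weighted graph. -/
noncomputable def walkWeight {G : SimpleGraph V} (w : Sym2 V → ℝ≥0∞)
    {u v : V} (p : G.Walk u v) : ℝ≥0∞ :=
  (p.edges.map w).sum

/-- Shortest-path metric of an edge-weighted graph: the infimum of the total
weights of walks between the two vertices. -/
noncomputable def gdist (G : SimpleGraph V) (w : Sym2 V → ℝ≥0∞) (u v : V) : ℝ≥0∞ :=
  ⨅ p : G.Walk u v, walkWeight w p

/-- Shortest-path distance measured within the subgraph induced on `S`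
(`⊤` if one of the endpoints is not in `S`). -/
noncomputable def distOn (G : SimpleGraph V) (w : Sym2 V → ℝ≥0∞) (S : Set V)
    (u v : V) : ℝ≥0∞ :=
  ⨅ (hu : u ∈ S), ⨅ (hv : v ∈ S), ⨅ (p : (G.induce S).Walk ⟨u, hu⟩ ⟨v, hv⟩),
    (p.edges.map (fun e => w (e.map Subtype.val))).sum

/-- Distance between two sets of vertices inside the subgraph induced on `S`. -/
noncomputable def setDistOn (G : SimpleGraph V) (w : Sym2 V → ℝ≥0∞) (S : Set V)
    (A B : Set V) : ℝ≥0∞ :=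
  ⨅ a ∈ A, ⨅ b ∈ B, distOn G w S a b

/-- Distance from a point to a set. -/
noncomputable def pdist (G : SimpleGraph V) (w : Sym2 V → ℝ≥0∞) (u : V) (X : Set V) : ℝ≥0∞ :=
  ⨅ x ∈ X, gdist G w u x

/-- `Y` is weakly `r`-reachable from `X` (with respect to the partition `P`
ordered by `le`): there is a path of total weight at most `r` from a vertex of `X`
to a vertex of `Y` in the subgraph induced on the union of the parts `Z` with `Y ⪯ Z`. -/
def WReach (G : SimpleGraph V) (w : Sym2 V → ℝ≥0∞) (P : Set (Set V))
    (le : Set V → Set V → Prop) (r : ℝ) (X Y : Set V) : Prop :=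
  setDistOn G w (⋃₀ {Z | Z ∈ P ∧ le Y Z}) X Y ≤ ENNReal.ofReal r

/-- The weak coloring number of `G` with respect to the partition `P`
and the order `le`: the maximum over `X ∈ P` of the number of parts weakly
`r`-reachable from `X`. -/
noncomputable def wcol (G : SimpleGraph V) (w : Sym2 V → ℝ≥0∞) (P : Set (Set V))
    (le : Set V → Set V → Prop) (r : ℝ) : ℕ :=
  ⨆ X ∈ P, {Y | Y ∈ P ∧ WReach G w P le r X Y}.ncard

/-- `le` is a total (linear) order on the collection `P`. -/
def IsLinearOrderOn {α : Type} (P : Set α) (le : α → α → Prop) : Prop :=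
  (∀ X ∈ P, le X X) ∧
  (∀ X ∈ P, ∀ Y ∈ P, le X Y → le Y X → X = Y) ∧
  (∀ X ∈ P, ∀ Y ∈ P, ∀ Z ∈ P, le X Y → le Y Z → le X Z) ∧
  (∀ X ∈ P, ∀ Y ∈ P, le X Y ∨ le Y X)

/-- An `ε`-ladder of width `r` and length `ℓ` in the metric `dist`. -/
def IsLadder (dist : V → V → ℝ≥0∞) (ε r : ℝ) (ℓ : ℕ) (x p : Fin ℓ → V) : Prop :=
  (∀ i j : Fin ℓ, j < i → dist (p j) (x i) ≤ ENNReal.ofReal r) ∧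
  (∀ i : Fin ℓ, ENNReal.ofReal ((1 + ε) * r) < dist (p i) (x i))

/-- `G` contains the complete graph on `h` vertices as a minor, witnessed by
pairwise disjoint connected nonempty branch sets that are pairwise adjacent. -/
def HasCompleteMinor (G : SimpleGraph V) (h : ℕ) : Prop :=
  ∃ B : Fin h → Set V,
    (∀ i, (G.induce (B i)).Connected) ∧
    (∀ i j, i ≠ j → Disjoint (B i) (B j)) ∧
    (∀ i j, i ≠ j → ∃ u ∈ B i, ∃ v ∈ B j, G.Adj u v)

/-- `(T, bag)` is a tree decomposition of `G`. -/
def IsTreeDecompOf {ι : Type} (G : SimpleGraph V) (T : SimpleGraph ι) (bag : ι → Set V) : Prop :=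
  T.IsTree ∧
  (∀ u v : V, G.Adj u v → ∃ t, u ∈ bag t ∧ v ∈ bag t) ∧
  (∀ v : V, (T.induce {t | v ∈ bag t}).Connected)

/-- `G` has treewidth at most `n`. -/
def TreewidthAtMost (G : SimpleGraph V) (n : ℕ) : Prop :=
  ∃ (ι : Type) (T : SimpleGraph ι) (bag : ι → Set V),
    IsTreeDecompOf G T bag ∧ ∀ t, (bag t).ncard ≤ n + 1

/-- `D` is an `r`-cover of the edge-weighted graph `(G, w)`. -/
def IsCover (G : SimpleGraph V) (w : Sym2 V → ℝ≥0∞) (r : ℝ) (D : Set (Set V)) : Prop :=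
  ∀ v : V, ∃ A ∈ D, ∀ u : V, gdist G w v u ≤ ENNReal.ofReal r → u ∈ A



section Basics

variable {G : SimpleGraph V} {w : Sym2 V → ℝ}

/-- real weight of a walk -/
noncomputable def wt (w : Sym2 V → ℝ) {u v : V} (p : G.Walk u v) : ℝ := (p.edges.map w).sum

/-- there is a walk from `u` to `v` inside `A` of weight at most `L` -/
def WIn (G : SimpleGraph V) (w : Sym2 V → ℝ) (A : Set V) (u v : V) (L : ℝ) : Prop :=
  ∃ p : G.Walk u v, (∀ x ∈ p.support, x ∈ A) ∧ wt w p ≤ L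

/-- outer vertex boundary -/
def nb (G : SimpleGraph V) (A : Set V) : Set V := {u | u ∉ A ∧ ∃ v ∈ A, G.Adj v u}

theorem wt_nonneg (hw : ∀ e, 0 ≤ w e) {u v : V} (p : G.Walk u v) : 0 ≤ wt w p := by
  unfold wt
  apply List.sum_nonneg
  intro x hx
  obtain ⟨e, _, rfl⟩ := List.mem_map.1 hx
  exact hw e

theorem wt_append {u v x : V} (p : G.Walk u v) (q : G.Walk v x) :
    wt w (p.append q) = wt w p + wt w q := by
  simp [wt, SimpleGraph.Walk.edges_append]

theorem wt_reverse {u v : V} (p : G.Walk u v) : wt w p.reverse = wt w p := by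
  simp [wt, SimpleGraph.Walk.edges_reverse, List.sum_reverse]

theorem wt_cons {u v x : V} (h : G.Adj u v) (p : G.Walk v x) :
    wt w (SimpleGraph.Walk.cons h p) = w s(u, v) + wt w p := by
  simp [wt]

theorem WIn.refl {A : Set V} {u : V} (hu : u ∈ A) {L : ℝ} (hL : 0 ≤ L) : WIn G w A u u L :=
  ⟨SimpleGraph.Walk.nil, by simpa using hu, by simpa [wt] using hL⟩

theorem WIn.mono {A B : Set V} (hAB : A ⊆ B) {u v : V} {L M : ℝ} (hLM : L ≤ M)
    (h : WIn G w A u v L) : WIn G w B u v M := by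
  obtain ⟨p, hp, hL⟩ := h
  exact ⟨p, fun x hx => hAB (hp x hx), hL.trans hLM⟩

theorem WIn.trans {A : Set V} {u v x : V} {L M : ℝ}
    (h : WIn G w A u v L) (h' : WIn G w A v x M) : WIn G w A u x (L + M) := by
  obtain ⟨p, hp, hL⟩ := h
  obtain ⟨q, hq, hM⟩ := h'
  refine ⟨p.append q, ?_, by rw [wt_append]; linarith⟩
  intro y hy
  rcases (SimpleGraph.Walk.mem_support_append_iff _ _).1 hy with h | h
  · exact hp y h
  · exact hq y h

theorem WIn.symm {A : Set V} {u v : V} {L : ℝ}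
    (h : WIn G w A u v L) : WIn G w A v u L := by
  obtain ⟨p, hp, hL⟩ := h
  exact ⟨p.reverse, by simpa using hp, by rwa [wt_reverse]⟩

theorem WIn.left_mem {A : Set V} {u v : V} {L : ℝ} (h : WIn G w A u v L) : u ∈ A := by
  obtain ⟨p, hp, hL⟩ := h
  exact hp _ p.start_mem_support

theorem WIn.right_mem {A : Set V} {u v : V} {L : ℝ} (h : WIn G w A u v L) : v ∈ A :=
  h.symm.left_mem

theorem WIn.nonneg (hw : ∀ e, 0 ≤ w e) {A : Set V} {u v : V} {L : ℝ}
    (h : WIn G w A u v L) : 0 ≤ L := by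
  obtain ⟨p, hp, hL⟩ := h
  exact (wt_nonneg hw p).trans hL

theorem WIn.adj {A : Set V} {u v : V} (hu : u ∈ A) (hv : v ∈ A) (h : G.Adj u v) :
    WIn G w A u v (w s(u, v)) := by
  refine ⟨SimpleGraph.Walk.cons h SimpleGraph.Walk.nil, ?_, ?_⟩
  · simp [hu, hv]
  · simp [wt]

/-- first exit of a walk from a set `H` -/
theorem WIn.exit {B H : Set V} {u v : V} {L : ℝ} (h : WIn G w B u v L)
    (hu : u ∈ H) (hv : v ∉ H) :
    ∃ x y L0 L2, x ∈ H ∧ y ∉ H ∧ G.Adj x y ∧ WIn G w (H ∩ B) u x L0 ∧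
      WIn G w B y v L2 ∧ L0 + w s(x, y) + L2 ≤ L := by
  obtain ⟨p, hp, hL⟩ := h
  induction p generalizing L with
  | nil => exact absurd hu hv
  | @cons a b c hab q ih =>
    have haB : a ∈ B := hp a (by simp)
    have hq : ∀ x ∈ q.support, x ∈ B := fun x hx => hp x (by simp [hx])
    rw [wt_cons] at hL
    by_cases hb : b ∈ H
    · obtain ⟨x, y, L0, L2, hx, hy, hxy, h0, h2, hs⟩ :=
        ih hb hv hq (L := wt w q) le_rfl
      have hbB : b ∈ B := hq b q.start_mem_support
      have e0 : WIn G w (H ∩ B) a b (w s(a, b)) := WIn.adj ⟨hu, haB⟩ ⟨hb, hbB⟩ hab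
      exact ⟨x, y, _, L2, hx, hy, hxy, e0.trans h0, h2, by linarith⟩
    · have ha : a ∈ H ∩ B := ⟨hu, haB⟩
      exact ⟨a, b, 0, wt w q, hu, hb, hab, WIn.refl ha le_rfl, ⟨q, hq, le_rfl⟩, by linarith⟩

/-- a walk starting in `D` which avoids the boundary of `D` stays inside -/
theorem WIn.stay {B D : Set V} {u v : V} {L : ℝ} (h : WIn G w B u v L)
    (hu : u ∈ D) (hD : ∀ x ∈ nb G D, x ∉ B) : WIn G w (D ∩ B) u v L := by
  obtain ⟨p, hp, hL⟩ := h
  refine ⟨p, ?_, hL⟩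
  clear hL
  induction p with
  | nil => intro x hx; simp at hx; subst hx; exact ⟨hu, hp _ (by simp)⟩
  | @cons a b c hab q ih =>
    have hq : ∀ x ∈ q.support, x ∈ B := fun x hx => hp x (by simp [hx])
    have hb : b ∈ D := by
      by_contra hb
      exact hD b ⟨hb, a, hu, hab⟩ (hq b q.start_mem_support)
    intro x hx
    rw [SimpleGraph.Walk.support_cons] at hx
    rcases List.mem_cons.1 hx with rfl | hx
    · exact ⟨hu, hp _ (by simp)⟩
    · exact ih hb hq x hx

theorem exists_min_walk [Fintype V] (hw : ∀ e, 0 ≤ w e) {A : Set V} {u v : V} {L : ℝ}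
    (h : WIn G w A u v L) :
    ∃ p : G.Walk u v, (∀ x ∈ p.support, x ∈ A) ∧ ∀ M, WIn G w A u v M → wt w p ≤ M := by
  classical
  let S : Finset (G.Path u v) := Finset.univ.filter (fun p => ∀ x ∈ p.1.support, x ∈ A)
  have key : ∀ M, WIn G w A u v M → ∃ p ∈ S, wt w p.1 ≤ M := by
    rintro M ⟨p, hp, hM⟩
    refine ⟨p.toPath, ?_, ?_⟩
    · simp only [S, Finset.mem_filter, Finset.mem_univ, true_and]
      intro x hx
      exact hp x (p.support_bypass_subset_support hx)
    · refine le_trans ?_ hM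
      unfold wt
      apply List.Sublist.sum_le_sum
      · exact (p.edges_bypass_sublist_edges).map w
      · intro x hx
        obtain ⟨e, _, rfl⟩ := List.mem_map.1 hx
        exact hw e
  obtain ⟨p0, hp0, _⟩ := key L h
  obtain ⟨p, hpS, hpm⟩ := S.exists_min_image (fun p => wt w p.1) ⟨p0, hp0⟩
  refine ⟨p.1, (Finset.mem_filter.1 hpS).2, ?_⟩
  intro M hM
  obtain ⟨q, hq, hqM⟩ := key M hM
  exact (hpm q hq).trans hqM

/-- distance inside a set -/
noncomputable def dst (G : SimpleGraph V) (w : Sym2 V → ℝ) (A : Set V) (u v : V) : ℝ :=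
  sInf {L | WIn G w A u v L}

theorem dst_le (hw : ∀ e, 0 ≤ w e) {A : Set V} {u v : V} {L : ℝ}
    (h : WIn G w A u v L) : dst G w A u v ≤ L :=
  csInf_le ⟨0, fun _ hx => WIn.nonneg hw hx⟩ h

theorem dst_walk [Fintype V] (hw : ∀ e, 0 ≤ w e) {A : Set V} {u v : V} {L : ℝ}
    (h : WIn G w A u v L) :
    ∃ p : G.Walk u v, (∀ x ∈ p.support, x ∈ A) ∧ wt w p = dst G w A u v := by
  obtain ⟨p, hp, hm⟩ := exists_min_walk hw h
  refine ⟨p, hp, le_antisymm ?_ (dst_le hw ⟨p, hp, le_rfl⟩)⟩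
  exact le_csInf ⟨L, h⟩ fun M hM => hm M hM

theorem dst_win [Fintype V] (hw : ∀ e, 0 ≤ w e) {A : Set V} {u v : V} {L : ℝ}
    (h : WIn G w A u v L) : WIn G w A u v (dst G w A u v) := by
  obtain ⟨p, hp, hm⟩ := dst_walk hw h
  exact ⟨p, hp, hm.le⟩

/-- connected vertex set -/
def Cn (G : SimpleGraph V) (w : Sym2 V → ℝ) (A : Set V) : Prop :=
  A.Nonempty ∧ ∀ u ∈ A, ∀ v ∈ A, ∃ L, WIn G w A u v L

theorem Cn.induce {A : Set V} (h : Cn G w A) : (G.induce A).Connected := by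
  obtain ⟨⟨a, ha⟩, hc⟩ := h
  have : Nonempty A := ⟨⟨a, ha⟩⟩
  refine ⟨?_⟩
  rintro ⟨u, hu⟩ ⟨v, hv⟩
  obtain ⟨L, p, hp, _⟩ := hc u hu v hv
  exact ⟨p.induce A hp⟩

/-- shortest path sets -/
theorem exists_geodesic [Fintype V] (hw : ∀ e, 0 ≤ w e) {A : Set V} (hA : Cn G w A) {r v : V}
    (hr : r ∈ A) (hv : v ∈ A) :
    ∃ T : Set V, T ⊆ A ∧ r ∈ T ∧ v ∈ T ∧ (∀ x ∈ T, ∃ L, WIn G w T r x L) ∧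
      ∀ x ∈ T, ∀ y ∈ T, WIn G w A x y |dst G w A r x - dst G w A r y| := by
  classical
  obtain ⟨L, hL⟩ := hA.2 r hr v hv
  obtain ⟨p, hp, hpm⟩ := dst_walk hw hL
  have split : ∀ x ∈ p.support, ∃ (q : G.Walk r x) (q' : G.Walk x v), p = q.append q' := by
    intro x hx
    exact (p.mem_support_iff_exists_append).1 hx
  have htri : ∀ x ∈ A, ∀ l, WIn G w A x v l → dst G w A r v ≤ dst G w A r x + l := by
    intro x hx l hl
    obtain ⟨L', hL'⟩ := hA.2 r hr x hx
    exact dst_le hw ((dst_win hw hL').trans hl)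
  have main : ∀ x ∈ p.support, ∀ (q : G.Walk r x) (q' : G.Walk x v), p = q.append q' →
      wt w q = dst G w A r x ∧ ∀ y ∈ q.support,
        WIn G w A x y |dst G w A r x - dst G w A r y| := by
    rintro x hx q q' hpq
    have hqA : ∀ y ∈ q.support, y ∈ A := fun y hy => hp y (by
      rw [hpq]; exact (SimpleGraph.Walk.mem_support_append_iff _ _).2 (Or.inl hy))
    have hqA' : ∀ y ∈ q'.support, y ∈ A := fun y hy => hp y (by
      rw [hpq]; exact (SimpleGraph.Walk.mem_support_append_iff _ _).2 (Or.inr hy))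
    have h1 : dst G w A r x ≤ wt w q := dst_le hw ⟨q, hqA, le_rfl⟩
    have h2 := htri x (hp x hx) _ ⟨q', hqA', le_rfl⟩
    have h3 : wt w q + wt w q' = dst G w A r v := by rw [← wt_append, ← hpq, hpm]
    have h4 : wt w q = dst G w A r x := by linarith
    refine ⟨h4, ?_⟩
    intro y hy
    obtain ⟨s, s', hs⟩ := (q.mem_support_iff_exists_append).1 hy
    have hsA : ∀ z ∈ s.support, z ∈ A := fun z hz => hqA z (by
      rw [hs]; exact (SimpleGraph.Walk.mem_support_append_iff _ _).2 (Or.inl hz))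
    have hsA' : ∀ z ∈ s'.support, z ∈ A := fun z hz => hqA z (by
      rw [hs]; exact (SimpleGraph.Walk.mem_support_append_iff _ _).2 (Or.inr hz))
    have h5 : wt w s + wt w s' = dst G w A r x := by rw [← wt_append, ← hs, h4]
    have h6 : dst G w A r y ≤ wt w s := dst_le hw ⟨s, hsA, le_rfl⟩
    have h7 : WIn G w A y x (wt w s') := ⟨s', hsA', le_rfl⟩
    refine h7.symm.mono le_rfl ?_
    exact le_trans (by linarith) (le_abs_self _)
  refine ⟨{x | x ∈ p.support}, fun x hx => hp x hx, p.start_mem_support, p.end_mem_support, ?_, ?_⟩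
  · intro x hx
    obtain ⟨q, q', hq⟩ := split x hx
    refine ⟨wt w q, q, ?_, le_rfl⟩
    intro y hy
    change y ∈ p.support
    rw [hq]; exact (SimpleGraph.Walk.mem_support_append_iff _ _).2 (Or.inl hy)
  · intro x hx y hy
    obtain ⟨q, q', hq⟩ := split x hx
    have hy' : y ∈ p.support := hy
    rw [hq] at hy'
    rcases (SimpleGraph.Walk.mem_support_append_iff _ _).1 hy' with h | h
    · exact (main x hx q q' hq).2 y h
    · obtain ⟨s, s', hs⟩ := (q'.mem_support_iff_exists_append).1 h
      have := (main y hy (q.append s) s' (by rw [hq, hs, SimpleGraph.Walk.append_assoc])).2 x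
        ((SimpleGraph.Walk.mem_support_append_iff _ _).2 (Or.inl q.end_mem_support))
      rw [abs_sub_comm]
      exact this.symm

theorem dst_lip [Fintype V] (hw : ∀ e, 0 ≤ w e) {A : Set V} (hA : Cn G w A) {r : V}
    (hr : r ∈ A) {x y : V} {L : ℝ} (h : WIn G w A x y L) :
    |dst G w A r x - dst G w A r y| ≤ L := by
  have aux : ∀ {x y : V}, WIn G w A x y L → dst G w A r y - dst G w A r x ≤ L := by
    intro x y h
    obtain ⟨M, hM⟩ := hA.2 r hr x h.left_mem
    have := dst_le hw ((dst_win hw hM).trans h)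
    linarith
  rw [abs_le]
  exact ⟨by linarith [aux h], by linarith [aux h.symm]⟩

end Basics

section Comps

variable {G : SimpleGraph V} {w : Sym2 V → ℝ}

/-- vertices of `C` at distance less than `γ` from `Q` -/
def Near (G : SimpleGraph V) (w : Sym2 V → ℝ) (C Q : Set V) (γ : ℝ) (x : V) : Prop :=
  ∃ z ∈ C, ∃ u ∈ Q, G.Adj z u ∧ ∃ L, WIn G w C x z L ∧ L + w s(z, u) < γ

theorem voronoi [Fintype V] (hw : ∀ e, 0 ≤ w e) {C : Set V} (hC : Cn G w C) (Q : Set V)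
    (col : V → ℕ) (γ : ℝ) :
    ∃ f : V → ℕ, ∀ x ∈ C, Near G w C Q γ x → ∃ z ∈ C, ∃ u ∈ Q, G.Adj z u ∧ col u = f x ∧
      ∃ L, L + w s(z, u) < γ ∧ WIn G w {y | y ∈ C ∧ Near G w C Q γ y ∧ f y = f x} x z L := by
  classical
  by_cases hne : ∃ z ∈ C, ∃ u ∈ Q, G.Adj z u
  swap
  · refine ⟨fun _ => 0, ?_⟩
    rintro x hx ⟨z, hz, u, hu, hzu, _⟩
    exact absurd ⟨z, hz, u, hu, hzu⟩ hne
  let S : Finset (V × V) := Finset.univ.filter (fun q => q.1 ∈ C ∧ q.2 ∈ Q ∧ G.Adj q.1 q.2)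
  have hS : S.Nonempty := by
    obtain ⟨z, hz, u, hu, hzu⟩ := hne
    exact ⟨(z, u), by simp [S, hz, hu, hzu]⟩
  let D : V → V × V → ℝ := fun x q => dst G w C x q.1 + w s(q.1, q.2)
  have hex : ∀ x, ∃ q ∈ S, ∀ q' ∈ S,
      toLex (D x q, col q.2) ≤ toLex (D x q', col q'.2) := fun x =>
    S.exists_min_image (fun q => toLex (D x q, col q.2)) hS
  choose q hqS hq using hex
  have hmem : ∀ x, (q x).1 ∈ C ∧ (q x).2 ∈ Q ∧ G.Adj (q x).1 (q x).2 := fun x => by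
    have := hqS x
    simpa [S] using this
  refine ⟨fun x => col (q x).2, ?_⟩
  rintro x hx ⟨z, hz, u, hu, hzu, L, hL, hLγ⟩
  have hDx : D x (q x) < γ := by
    have h1 := hq x (z, u) (by simp [S, hz, hu, hzu])
    have h2 : D x (q x) ≤ D x (z, u) := by
      rcases Prod.Lex.toLex_le_toLex.1 h1 with h | h
      · exact h.le
      · exact h.1.le
    have h3 : D x (z, u) ≤ L + w s(z, u) := by
      have := dst_le hw hL
      simp only [D]; linarith
    linarith
  obtain ⟨hqC, hqQ, hqadj⟩ := hmem x
  obtain ⟨L', hL'⟩ := hC.2 x hx _ hqC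
  obtain ⟨p, hp, hpm⟩ := dst_walk hw hL'
  refine ⟨(q x).1, hqC, (q x).2, hqQ, hqadj, rfl, dst G w C x (q x).1, hDx, p, ?_, hpm.le⟩
  intro y hy
  obtain ⟨s, s', hs⟩ := (p.mem_support_iff_exists_append).1 hy
  have hsC : WIn G w C x y (wt w s) := ⟨s, fun z hz => hp z (by
      rw [hs]; exact (SimpleGraph.Walk.mem_support_append_iff _ _).2 (Or.inl hz)), le_rfl⟩
  have hsC' : WIn G w C y (q x).1 (wt w s') := ⟨s', fun z hz => hp z (by
      rw [hs]; exact (SimpleGraph.Walk.mem_support_append_iff _ _).2 (Or.inr hz)), le_rfl⟩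
  have hsum : wt w s + wt w s' = dst G w C x (q x).1 := by rw [← wt_append, ← hs, hpm]
  have hs0 := wt_nonneg hw s
  refine ⟨hp y hy, ⟨(q x).1, hqC, (q x).2, hqQ, hqadj, _, hsC', ?_⟩, ?_⟩
  · simp only [D] at hDx; linarith
  · have h1 := hq y (q x) (hqS x)
    have h2 := hq x (q y) (hqS y)
    have h3 : D y (q x) ≤ wt w s' + w s((q x).1, (q x).2) := by
      have := dst_le hw hsC'
      simp only [D]; linarith
    have h4 : D x (q y) ≤ wt w s + D y (q y) := by
      obtain ⟨M, hM⟩ := hC.2 y (hp y hy) _ (hmem y).1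
      have := dst_le hw (hsC.trans (dst_win hw hM))
      simp only [D]; linarith
    have h5 : D x (q x) = wt w s + wt w s' + w s((q x).1, (q x).2) := by
      simp only [D]; linarith
    rcases Prod.Lex.toLex_le_toLex.1 h1 with a | a <;>
    rcases Prod.Lex.toLex_le_toLex.1 h2 with b | b <;> simp only at a b
    · linarith
    · linarith [b.1]
    · linarith [a.1]
    · exact le_antisymm a.2 b.2

/-- connected component of `U` -/
def IsComp (G : SimpleGraph V) (w : Sym2 V → ℝ) (U C : Set V) : Prop :=
  C ⊆ U ∧ Cn G w C ∧ ∀ x ∈ nb G C, x ∉ U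

theorem comp_exists {U : Set V} {x : V} (hx : x ∈ U) : ∃ C, IsComp G w U C ∧ x ∈ C := by
  refine ⟨{y | ∃ L, WIn G w U x y L}, ⟨?_, ⟨⟨x, 0, WIn.refl hx le_rfl⟩, ?_⟩, ?_⟩,
    0, WIn.refl hx le_rfl⟩
  · rintro y ⟨L, hL⟩; exact hL.right_mem
  · have key : ∀ y ∈ {y | ∃ L, WIn G w U x y L}, ∃ L,
        WIn G w {y | ∃ L, WIn G w U x y L} x y L := by
      rintro y ⟨L, hL⟩
      refine ⟨L, (hL.stay (D := {y | ∃ L, WIn G w U x y L}) ⟨0, WIn.refl hx le_rfl⟩ ?_).mono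
        Set.inter_subset_left le_rfl⟩
      rintro z ⟨hz, y, ⟨M, hM⟩, hyz⟩ hzU
      exact hz ⟨_, hM.trans (WIn.adj hM.right_mem hzU hyz)⟩
    intro u hu v hv
    obtain ⟨L, hL⟩ := key u hu
    obtain ⟨M, hM⟩ := key v hv
    exact ⟨_, hL.symm.trans hM⟩
  · rintro z ⟨hz, y, ⟨M, hM⟩, hyz⟩ hzU
    exact hz ⟨_, hM.trans (WIn.adj hM.right_mem hzU hyz)⟩

theorem Cn.sub {C D : Set V} (hC : Cn G w C) (hD : ∀ x ∈ nb G D, x ∉ C) {z : V}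
    (hz : z ∈ C) (hzD : z ∈ D) : C ⊆ D := by
  intro y hy
  obtain ⟨L, hL⟩ := hC.2 z hz y hy
  exact (hL.stay hzD hD).right_mem.1

theorem IsComp.sub {U C D : Set V} (hC : IsComp G w U C) (hD : ∀ x ∈ nb G D, x ∉ U) {z : V}
    (hz : z ∈ C) (hzD : z ∈ D) : C ⊆ D :=
  hC.2.1.sub (fun x hx h => hD x hx (hC.1 h)) hz hzD

theorem IsComp.eq {U C D : Set V} (hC : IsComp G w U C) (hD : IsComp G w U D) {z : V}
    (hz : z ∈ C) (hzD : z ∈ D) : C = D :=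
  (hC.sub hD.2.2 hz hzD).antisymm (hD.sub hC.2.2 hzD hz)

/-- components of a smaller set -/
theorem IsComp.refine {U A C' : Set V} (hC' : IsComp G w (U \ A) C') :
    ∃ C, IsComp G w U C ∧ C' ⊆ C ∧ ∀ u ∈ nb G C', u ∈ nb G C ∨ (u ∈ A ∧ u ∈ C) := by
  obtain ⟨z, hz⟩ := hC'.2.1.1
  obtain ⟨C, hC, hzC⟩ := comp_exists (G := G) (w := w) (hC'.1 hz).1
  have hsub : C' ⊆ C := hC'.2.1.sub (fun x hx h => hC.2.2 x hx (hC'.1 h).1) hz hzC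
  refine ⟨C, hC, hsub, ?_⟩
  rintro u ⟨hu, v, hv, hvu⟩
  by_cases huC : u ∈ C
  · right
    refine ⟨?_, huC⟩
    by_contra huA
    exact hC'.2.2 u ⟨hu, v, hv, hvu⟩ ⟨hC.1 huC, huA⟩
  · left
    exact ⟨huC, v, hsub hv, hvu⟩

/-- owners of the boundary -/
def KK (G : SimpleGraph V) (own : V → ℕ) (D : Set V) : Set ℕ := own '' nb G D

/-- `C` is separated from `i` by a buffer -/
def Sett (G : SimpleGraph V) (w : Sym2 V → ℝ) (γ : ℝ) (U : Set V) (own : V → ℕ)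
    (C : Set V) (i : ℕ) : Prop :=
  ∃ H, C ⊆ H ∧ (∀ x ∈ nb G H, x ∉ U) ∧ (∀ v ∈ H, v ∉ U → own v ≠ i) ∧
    (∀ v ∈ nb G H, own v ≠ i) ∧
    ∀ x ∈ C, ∀ z ∈ H, ∀ u ∈ nb G H, i < own u → G.Adj z u → ∀ L, WIn G w H x z L →
      γ ≤ L + w s(z, u)

theorem Sett.anti {γ : ℝ} {U : Set V} {own : V → ℕ} {C C' : Set V} {i : ℕ}
    (h : Sett G w γ U own C i) (hC : C' ⊆ C) : Sett G w γ U own C' i := by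
  obtain ⟨H, h1, h2, h3, h4, h5⟩ := h
  exact ⟨H, hC.trans h1, h2, h3, h4, fun x hx => h5 x (hC hx)⟩

theorem KK_congr {U A C0 D : Set V} {own own' : V → ℕ} (hA : A ⊆ C0) (hC0 : C0 ⊆ U)
    (ho : ∀ v, v ∉ A → own' v = own v) (hD : ∀ x ∈ nb G D, x ∉ U) :
    KK G own' D = KK G own D := by
  apply Set.image_congr
  intro x hx
  exact ho x fun h => hD x hx (hC0 (hA h))

theorem Sett.frame {γ : ℝ} {U : Set V} {own own' : V → ℕ} {C C0 A : Set V} {i n : ℕ}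
    (h : Sett G w γ U own C i) (hC0 : IsComp G w U C0) (hA : A ⊆ C0)
    (ho : ∀ v, v ∉ A → own' v = own v)
    (hoA : ∀ v ∈ A, own' v ∈ KK G own C0 ∨ own' v = n) (hi : i < n) :
    Sett G w γ (U \ A) own' C i := by
  obtain ⟨H, h1, h2, h3, h4, h5⟩ := h
  have hn : ∀ x ∈ nb G H, own' x = own x := fun x hx =>
    ho x fun h => h2 x hx (hC0.1 (hA h))
  refine ⟨H, h1, fun x hx hxU => h2 x hx hxU.1, ?_, ?_, ?_⟩
  · intro v hv hvU
    by_cases hvA : v ∈ A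
    · rcases hoA v hvA with hK | hn
      · obtain ⟨u, hu, huv⟩ := hK
        have hsub := hC0.sub h2 (hA hvA) hv
        rw [← huv]
        by_cases huH : u ∈ H
        · exact h3 u huH (hC0.2.2 u hu)
        · obtain ⟨_, y, hy, hyu⟩ := hu
          exact h4 u ⟨huH, y, hsub hy, hyu⟩
      · omega
    · rw [ho v hvA]
      exact h3 v hv fun h => hvU ⟨h, hvA⟩
  · intro v hv
    rw [hn v hv]; exact h4 v hv
  · intro x hx z hz u hu hiu
    rw [hn u hu] at hiu
    exact h5 x hx z hz u hu hiu

end Comps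

section Decomp

variable {G : SimpleGraph V} {w : Sym2 V → ℝ}

theorem KK_fin [Fintype V] (own : V → ℕ) (D : Set V) : (KK G own D).Finite :=
  Set.toFinite (own '' nb G D)

/-- invariant of the buffered cop decomposition -/
structure Inv (G : SimpleGraph V) (w : Sym2 V → ℝ) (γ : ℝ) (d : ℕ) (U : Set V) (own : V → ℕ)
    (n : ℕ) (dom : ℕ → Set V) (T : ℕ → ℕ → Set V) (pos : ℕ → V → ℝ) : Prop where
  own_lt : ∀ v, v ∉ U → own v < n
  own_dom : ∀ v, v ∉ U → v ∈ dom (own v)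
  dom_nb : ∀ i < n, ∀ u ∈ nb G (dom i), u ∉ U ∧ own u < i
  cls : ∀ i < n, Cn G w {v | v ∉ U ∧ own v = i}
  clique : ∀ C, IsComp G w U C → ∀ a ∈ KK G own C, ∀ b ∈ KK G own C, a < b →
    a ∈ KK G own (dom b)
  cliqued : ∀ j < n, ∀ a ∈ KK G own (dom j), ∀ b ∈ KK G own (dom j), a < b →
    a ∈ KK G own (dom b)
  adj : ∀ b < n, ∀ a ∈ KK G own (dom b), ∃ x y, x ∉ U ∧ own x = a ∧ y ∉ U ∧ own y = b ∧ G.Adj x y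
  absorbed : ∀ b < n, ∀ v ∈ dom b, v ∉ U → own v < b → own v ∈ KK G own (dom b)
  sett : ∀ b < n, ∀ i < b, i ∈ KK G own (dom b) ∨ Sett G w γ U own (dom b) i
  rad : ∀ v, v ∉ U → ∃ a ∈ insert (own v) (KK G own (dom (own v))), ∃ t ∈ T (own v) a,
    WIn G w (dom (own v)) v t (γ * (KK G own (dom (own v))).ncard)
  radC : ∀ C, IsComp G w U C → ∀ v ∈ nb G C,
    ∃ a ∈ insert (own v) (KK G own (dom (own v))), ∃ t ∈ T (own v) a,
    WIn G w (dom (own v)) v t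
      (γ * (KK G own (dom (own v)) ∩ {i | Sett G w γ U own C i}).ncard)
  lip : ∀ i < n, ∀ x y L, WIn G w (dom i) x y L → |pos i x - pos i y| ≤ L
  geo : ∀ i < n, ∀ j, ∀ x ∈ T i j, ∀ y ∈ T i j, WIn G w (dom i) x y |pos i x - pos i y|
  domsub : ∀ b < n, ∀ a ∈ KK G own (dom b), dom b ⊆ dom a
  kcard : ∀ b < n, (KK G own (dom b)).ncard ≤ d

variable {γ : ℝ} {d n : ℕ} {U : Set V} {own : V → ℕ} {dom : ℕ → Set V} {T : ℕ → ℕ → Set V}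
  {pos : ℕ → V → ℝ}

theorem Inv.kk_lt (I : Inv G w γ d U own n dom T pos) {C : Set V} (hC : IsComp G w U C) {a : ℕ}
    (ha : a ∈ KK G own C) : a < n := by
  obtain ⟨u, hu, rfl⟩ := ha
  exact I.own_lt u (hC.2.2 u hu)

theorem Inv.kk_sub (I : Inv G w γ d U own n dom T pos) {C : Set V} (hC : IsComp G w U C) {a : ℕ}
    (ha : a ∈ KK G own C) : C ⊆ dom a := by
  have han := I.kk_lt hC ha
  obtain ⟨u, hu, rfl⟩ := ha
  have hu1 := I.own_dom u (hC.2.2 u hu)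
  obtain ⟨huC, z, hz, hzu⟩ := hu
  refine hC.sub (fun x hx => (I.dom_nb _ han x hx).1) hz ?_
  by_contra hzd
  exact (I.dom_nb _ han z ⟨hzd, u, hu1, hzu.symm⟩).1 (hC.1 hz)

theorem Inv.kk_card [Fintype V] {h : ℕ} (hminor : ¬ HasCompleteMinor G h)
    (I : Inv G w γ d U own n dom T pos) {C : Set V} (hC : IsComp G w U C) :
    (KK G own C).ncard + 1 < h := by
  classical
  by_contra hcon
  push Not at hcon
  apply hminor
  have hfin : (KK G own C).Finite := KK_fin _ _
  have hcard : Fintype.card (Fin h) ≤ Fintype.card (Option hfin.toFinset) := by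
    rw [Fintype.card_option, Fintype.card_coe, ← Set.ncard_eq_toFinset_card _ hfin]
    simpa using hcon
  obtain ⟨g⟩ := Function.Embedding.nonempty_of_card_le hcard
  let B : Option hfin.toFinset → Set V := fun o =>
    match o with
    | none => C
    | some a => {v | v ∉ U ∧ own v = a.1}
  have hmem : ∀ a : hfin.toFinset, a.1 ∈ KK G own C := fun a => hfin.mem_toFinset.1 a.2
  have hadjlt : ∀ a ∈ KK G own C, ∀ b ∈ KK G own C, a < b →
      ∃ x ∈ {v | v ∉ U ∧ own v = a}, ∃ y ∈ {v | v ∉ U ∧ own v = b}, G.Adj x y := by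
    intro a ha b hb hab
    obtain ⟨x, y, h1, h2, h3, h4, h5⟩ := I.adj b (I.kk_lt hC hb) a (I.clique C hC a ha b hb hab)
    exact ⟨x, ⟨h1, h2⟩, y, ⟨h3, h4⟩, h5⟩
  have hadjC : ∀ a ∈ KK G own C, ∃ x ∈ C, ∃ y ∈ {v | v ∉ U ∧ own v = a}, G.Adj x y := by
    rintro a ⟨u, hu, rfl⟩
    obtain ⟨huC, z, hz, hzu⟩ := id hu
    exact ⟨z, hz, u, ⟨hC.2.2 u hu, rfl⟩, hzu⟩
  refine ⟨fun i => B (g i), ?_, ?_, ?_⟩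
  · intro i
    show (G.induce (B (g i))).Connected
    rcases hg : g i with _ | a
    · exact hC.2.1.induce
    · exact (I.cls a.1 (I.kk_lt hC (hmem a))).induce
  · intro i j hij
    have hne : g i ≠ g j := fun h => hij (g.injective h)
    show Disjoint (B (g i)) (B (g j))
    rw [Set.disjoint_left]
    rcases hg : g i with _ | a <;> rcases hg' : g j with _ | b
    · rw [hg, hg'] at hne; exact absurd rfl hne
    · intro x hx hx'; exact hx'.1 (hC.1 hx)
    · intro x hx hx'; exact hx.1 (hC.1 hx')
    · intro x hx hx'
      rw [hg, hg'] at hne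
      apply hne
      congr 1
      exact Subtype.ext (hx.2.symm.trans hx'.2)
  · intro i j hij
    have hne : g i ≠ g j := fun h => hij (g.injective h)
    show ∃ u ∈ B (g i), ∃ v ∈ B (g j), G.Adj u v
    rcases hg : g i with _ | a <;> rcases hg' : g j with _ | b
    · rw [hg, hg'] at hne; exact absurd rfl hne
    · exact hadjC _ (hmem b)
    · obtain ⟨x, hx, y, hy, hxy⟩ := hadjC _ (hmem a)
      exact ⟨y, hy, x, hx, hxy.symm⟩
    · rw [hg, hg'] at hne
      have hab : a.1 ≠ b.1 := fun h => hne (by rw [Subtype.ext h])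
      rcases lt_or_gt_of_ne hab with h | h
      · exact hadjlt _ (hmem a) _ (hmem b) h
      · obtain ⟨x, hx, y, hy, hxy⟩ := hadjlt _ (hmem b) _ (hmem a) h
        exact ⟨y, hy, x, hx, hxy.symm⟩

theorem Inv.grow [Fintype V] (hw : ∀ e, 0 ≤ w e) (hγ : 0 ≤ γ)
    (I : Inv G w γ d U own n dom T pos) {C0 : Set V} (hC0 : IsComp G w U C0) {i : ℕ}
    (hin : i < n) (hiK : i ∉ KK G own C0) (hiS : ¬ Sett G w γ U own C0 i) :
    ∃ (A : Set V) (own' : V → ℕ), A.Nonempty ∧ A ⊆ U ∧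
      Inv G w γ d (U \ A) own' n dom T pos := by
  classical
  set Q : Set V := {u | u ∈ nb G C0 ∧ i < own u} with hQ
  obtain ⟨f, hf⟩ := voronoi hw hC0.2.1 Q own γ
  set A : Set V := {x | x ∈ C0 ∧ Near G w C0 Q γ x} with hAdef
  have hA : A ⊆ C0 := fun x hx => hx.1
  have hAU : A ⊆ U := hA.trans hC0.1
  set own' : V → ℕ := fun v => if v ∈ A then f v else own v with hown'
  have ho : ∀ v, v ∉ A → own' v = own v := fun v hv => by simp [hown', hv]
  have hoU : ∀ v, v ∉ U → own' v = own v := fun v hv => ho v fun h => hv (hAU h)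
  -- main property of the new vertices
  have hnew : ∀ v ∈ A, ∃ z ∈ C0, ∃ u ∈ Q, G.Adj z u ∧ own u = own' v ∧ ∃ L,
      L + w s(z, u) < γ ∧ WIn G w {y | y ∈ A ∧ own' y = own' v} v z L := by
    intro v hv
    obtain ⟨z, hz, u, hu, hzu, hcol, L, hL, hW⟩ := hf v hv.1 hv.2
    have hov : own' v = f v := by simp [hown', hv]
    refine ⟨z, hz, u, hu, hzu, by rw [hov, hcol], L, hL, hW.mono ?_ le_rfl⟩
    rintro y ⟨hy1, hy2, hy3⟩
    have hyA : y ∈ A := ⟨hy1, hy2⟩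
    refine ⟨hyA, ?_⟩
    rw [hov, ← hy3]; simp [hown', hyA]
  have hoA : ∀ v ∈ A, own' v ∈ KK G own C0 := by
    intro v hv
    obtain ⟨z, hz, u, hu, hzu, hcol, _⟩ := hnew v hv
    exact ⟨u, hu.1, hcol⟩
  have hiA : ∀ v ∈ A, i < own' v := by
    intro v hv
    obtain ⟨z, hz, u, hu, hzu, hcol, _⟩ := hnew v hv
    rw [← hcol]; exact hu.2
  have hSf : ∀ C j, j < n → Sett G w γ U own C j → Sett G w γ (U \ A) own' C j :=
    fun C j hj h => h.frame hC0 hA ho (fun v hv => Or.inl (hoA v hv)) hj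
  have hK : ∀ b < n, KK G own' (dom b) = KK G own (dom b) := fun b hb =>
    KK_congr hA hC0.1 ho fun x hx => (I.dom_nb b hb x hx).1
  have hU' : ∀ v, v ∉ U \ A → v ∉ U ∨ v ∈ A := by
    intro v hv
    by_cases h : v ∈ A
    · exact Or.inr h
    · exact Or.inl fun h' => hv ⟨h', h⟩
  -- refinement of components
  have href : ∀ C', IsComp G w (U \ A) C' → ∃ C, IsComp G w U C ∧ C' ⊆ C ∧
      ∀ u ∈ nb G C', (u ∈ nb G C ∧ own' u = own u) ∨ (u ∈ A ∧ C = C0) := by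
    intro C' hC'
    obtain ⟨C, hC, hsub, hn⟩ := hC'.refine
    refine ⟨C, hC, hsub, fun u hu => ?_⟩
    rcases hn u hu with h | h
    · exact Or.inl ⟨h, hoU u (hC.2.2 u h)⟩
    · exact Or.inr ⟨h.1, hC.eq hC0 h.2 (hA h.1)⟩
  have hKC : ∀ C', IsComp G w (U \ A) C' → ∃ C, IsComp G w U C ∧ C' ⊆ C ∧
      KK G own' C' ⊆ KK G own C := by
    intro C' hC'
    obtain ⟨C, hC, hsub, hn⟩ := href C' hC'
    refine ⟨C, hC, hsub, ?_⟩
    rintro _ ⟨u, hu, rfl⟩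
    rcases hn u hu with h | h
    · exact ⟨u, h.1, h.2.symm⟩
    · rw [h.2]; exact hoA u h.1
  have hibK : ∀ v ∈ A, i ∈ KK G own (dom (own' v)) := by
    intro v hv
    have hlt := I.kk_lt hC0 (hoA v hv)
    rcases I.sett _ hlt i (hiA v hv) with h | h
    · exact h
    · exact absurd (h.anti (I.kk_sub hC0 (hoA v hv))) hiS
  -- radius for new vertices
  have hradA : ∀ v ∈ A, ∃ a ∈ insert (own' v) (KK G own (dom (own' v))), ∃ t ∈ T (own' v) a,
      WIn G w (dom (own' v)) v t
        (γ * ((KK G own (dom (own' v)) ∩ {j | Sett G w γ U own C0 j}).ncard + 1)) := by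
    intro v hv
    obtain ⟨z, hz, u, hu, hzu, hcol, L, hL, hW⟩ := hnew v hv
    have hsub := I.kk_sub hC0 (hoA v hv)
    have hud := I.own_dom u (hC0.2.2 u hu.1)
    obtain ⟨a, ha, t, ht, hWt⟩ := I.radC C0 hC0 u hu.1
    rw [hcol] at ha ht hWt hud
    refine ⟨a, ha, t, ht, ?_⟩
    have h1 : WIn G w (dom (own' v)) v z L := hW.mono (fun y hy => hsub (hA hy.1)) le_rfl
    have h2 := (h1.trans (WIn.adj (w := w) (hsub hz) hud hzu)).trans hWt
    refine h2.mono le_rfl ?_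
    rw [mul_add, mul_one]; linarith
  have hne : A.Nonempty := by
    by_contra hempty
    rw [Set.not_nonempty_iff_eq_empty] at hempty
    apply hiS
    refine ⟨C0, subset_rfl, hC0.2.2, fun v hv hvU => absurd (hC0.1 hv) hvU,
      fun v hv h => hiK ⟨v, hv, h⟩, ?_⟩
    intro x hx z hz u hu hiu hzu L hL
    by_contra hlt
    push Not at hlt
    have : x ∈ A := ⟨hx, z, hz, u, ⟨hu, hiu⟩, hzu, L, hL, hlt⟩
    rw [hempty] at this
    exact this
  refine ⟨A, own', hne, hAU, ?_⟩
  constructor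
  case own_lt =>
    intro v hv
    rcases hU' v hv with h | h
    · rw [hoU v h]; exact I.own_lt v h
    · exact I.kk_lt hC0 (hoA v h)
  case own_dom =>
    intro v hv
    rcases hU' v hv with h | h
    · rw [hoU v h]; exact I.own_dom v h
    · exact I.kk_sub hC0 (hoA v h) (hA h)
  case dom_nb =>
    intro j hj u hu
    have := I.dom_nb j hj u hu
    rw [hoU u this.1]
    exact ⟨fun h => this.1 h.1, this.2⟩
  case cls =>
    intro j hj
    obtain ⟨⟨x0, hx0, hx0'⟩, hc⟩ := I.cls j hj
    have hsub : {v | v ∉ U ∧ own v = j} ⊆ {v | v ∉ U \ A ∧ own' v = j} := by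
      rintro v ⟨hv, hv'⟩
      exact ⟨fun h => hv h.1, by rw [hoU v hv, hv']⟩
    have hto : ∀ v ∈ {v | v ∉ U \ A ∧ own' v = j}, ∃ L,
        WIn G w {v | v ∉ U \ A ∧ own' v = j} v x0 L := by
      rintro v ⟨hv, hvj⟩
      rcases hU' v hv with h | h
      · obtain ⟨L, hL⟩ := hc v ⟨h, by rw [← hvj, hoU v h]⟩ x0 ⟨hx0, hx0'⟩
        exact ⟨L, hL.mono hsub le_rfl⟩
      · obtain ⟨z, hz, u, hu, hzu, hcol, L, hL, hW⟩ := hnew v h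
        have huU := hC0.2.2 u hu.1
        obtain ⟨M, hM⟩ := hc u ⟨huU, by rw [hcol, hvj]⟩ x0 ⟨hx0, hx0'⟩
        have h1 : WIn G w {v | v ∉ U \ A ∧ own' v = j} v z L := hW.mono (by
          rintro y ⟨hy1, hy2⟩
          exact ⟨fun h => h.2 hy1, by rw [hy2, hvj]⟩) le_rfl
        have h2 := hM.mono hsub le_rfl
        exact ⟨_, (h1.trans (WIn.adj h1.right_mem h2.left_mem hzu)).trans h2⟩
    refine ⟨⟨x0, hsub ⟨hx0, hx0'⟩⟩, ?_⟩
    intro u hu v hv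
    obtain ⟨L, hL⟩ := hto u hu
    obtain ⟨M, hM⟩ := hto v hv
    exact ⟨_, hL.trans hM.symm⟩
  case clique =>
    intro C' hC' a ha b hb hab
    obtain ⟨C, hC, hsub, hk⟩ := hKC C' hC'
    rw [hK b (I.kk_lt hC (hk hb))]
    exact I.clique C hC a (hk ha) b (hk hb) hab
  case cliqued =>
    intro j hj a ha b hb hab
    rw [hK j hj] at ha hb
    have hbn : b < n := by
      obtain ⟨u, hu, rfl⟩ := hb
      exact I.own_lt u (I.dom_nb j hj u hu).1
    rw [hK b hbn]
    exact I.cliqued j hj a ha b hb hab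
  case adj =>
    intro b hb a ha
    rw [hK b hb] at ha
    obtain ⟨x, y, h1, h2, h3, h4, h5⟩ := I.adj b hb a ha
    exact ⟨x, y, fun h => h1 h.1, by rw [hoU x h1, h2], fun h => h3 h.1, by rw [hoU y h3, h4], h5⟩
  case absorbed =>
    intro b hb v hv hvU hlt
    rw [hK b hb]
    rcases hU' v hvU with h | h
    · rw [hoU v h] at hlt ⊢
      exact I.absorbed b hb v hv h hlt
    · have hsub := hC0.sub (fun x hx => (I.dom_nb b hb x hx).1) (hA h) hv
      obtain ⟨u, hu, huv⟩ := hoA v h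
      rw [← huv] at hlt ⊢
      by_cases hub : u ∈ dom b
      · exact I.absorbed b hb u hub (hC0.2.2 u hu) hlt
      · obtain ⟨_, y, hy, hyu⟩ := hu
        exact ⟨u, ⟨hub, y, hsub hy, hyu⟩, rfl⟩
  case sett =>
    intro b hb j hj
    rw [hK b hb]
    rcases I.sett b hb j hj with h | h
    · exact Or.inl h
    · exact Or.inr (hSf _ j (hj.trans hb) h)
  case rad =>
    intro v hv
    rcases hU' v hv with h | h
    · rw [hoU v h, hK _ (I.own_lt v h)]
      exact I.rad v h
    · rw [hK _ (I.kk_lt hC0 (hoA v h))]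
      obtain ⟨a, ha, t, ht, hW⟩ := hradA v h
      refine ⟨a, ha, t, ht, hW.mono le_rfl ?_⟩
      apply mul_le_mul_of_nonneg_left _ hγ
      have : (KK G own (dom (own' v)) ∩ {j | Sett G w γ U own C0 j}).ncard
          < (KK G own (dom (own' v))).ncard := by
        apply Set.ncard_lt_ncard _ (KK_fin _ _)
        refine ⟨Set.inter_subset_left, fun hsub => ?_⟩
        exact hiS (hsub (hibK v h)).2
      exact_mod_cast this
  case radC =>
    intro C' hC' v hv
    obtain ⟨C, hC, hsub, hn⟩ := href C' hC'
    rcases hn v hv with ⟨h, hov⟩ | ⟨h, rfl⟩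
    · rw [hov, hK _ (I.own_lt v (hC.2.2 v h))]
      obtain ⟨a, ha, t, ht, hW⟩ := I.radC C hC v h
      refine ⟨a, ha, t, ht, hW.mono le_rfl ?_⟩
      apply mul_le_mul_of_nonneg_left _ hγ
      have : (KK G own (dom (own v)) ∩ {j | Sett G w γ U own C j}).ncard
          ≤ (KK G own (dom (own v)) ∩ {j | Sett G w γ (U \ A) own' C' j}).ncard := by
        apply Set.ncard_le_ncard _ ((KK_fin _ _).subset Set.inter_subset_left)
        rintro j ⟨hj1, hj2⟩
        refine ⟨hj1, (hSf C j ?_ hj2).anti hsub⟩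
        obtain ⟨u, hu, rfl⟩ := hj1
        exact I.own_lt u (I.dom_nb _ (I.own_lt v (hC.2.2 v h)) u hu).1
      exact_mod_cast this
    · rw [hK _ (I.kk_lt hC0 (hoA v h))]
      obtain ⟨a, ha, t, ht, hW⟩ := hradA v h
      refine ⟨a, ha, t, ht, hW.mono le_rfl ?_⟩
      apply mul_le_mul_of_nonneg_left _ hγ
      have : (KK G own (dom (own' v)) ∩ {j | Sett G w γ U own C j}).ncard
          < (KK G own (dom (own' v)) ∩ {j | Sett G w γ (U \ A) own' C' j}).ncard := by
        apply Set.ncard_lt_ncard _ ((KK_fin _ _).subset Set.inter_subset_left)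
        refine ⟨?_, fun hsub' => ?_⟩
        · rintro j ⟨hj1, hj2⟩
          refine ⟨hj1, (hSf C j ?_ hj2).anti hsub⟩
          obtain ⟨u, hu, rfl⟩ := hj1
          exact I.own_lt u (I.dom_nb _ (I.kk_lt hC0 (hoA v h)) u hu).1
        · refine hiS (hsub' ⟨hibK v h, ?_⟩).2
          refine ⟨C, hsub, fun x hx hxU => hC0.2.2 x hx hxU.1, ?_, ?_, ?_⟩
          · intro x hx hxU
            rcases hU' x hxU with h' | h'
            · exact absurd (hC0.1 hx) h'
            · exact (hiA x h').ne'
          · intro x hx hxi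
            rw [hoU x (hC0.2.2 x hx)] at hxi
            exact hiK ⟨x, hx, hxi⟩
          · intro x hx z hz u hu hiu hzu L hL
            rw [hoU u (hC0.2.2 u hu)] at hiu
            by_contra hlt
            push Not at hlt
            exact (hC'.1 hx).2 ⟨hsub hx, z, hz, u, ⟨hu, hiu⟩, hzu, L, hL, hlt⟩
      exact_mod_cast this
  case lip => exact I.lip
  case geo => exact I.geo
  case domsub =>
    intro b hb a ha
    rw [hK b hb] at ha
    exact I.domsub b hb a ha
  case kcard =>
    intro b hb
    rw [hK b hb]; exact I.kcard b hb

end Decomp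

section Create

variable {G : SimpleGraph V} {w : Sym2 V → ℝ}
variable {γ : ℝ} {d n : ℕ} {U : Set V} {own : V → ℕ} {dom : ℕ → Set V} {T : ℕ → ℕ → Set V}
  {pos : ℕ → V → ℝ}

theorem Inv.create [Fintype V] (hw : ∀ e, 0 ≤ w e) (hγ : 0 ≤ γ)
    (I : Inv G w γ d U own n dom T pos) {C0 : Set V} (hC0 : IsComp G w U C0)
    (hd0 : (KK G own C0).ncard ≤ d)
    (hnv : ∀ i < n, i ∈ KK G own C0 ∨ Sett G w γ U own C0 i) :
    ∃ (A : Set V) (own' : V → ℕ) (dom' : ℕ → Set V) (T' : ℕ → ℕ → Set V) (pos' : ℕ → V → ℝ),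
      A.Nonempty ∧ A ⊆ U ∧ Inv G w γ d (U \ A) own' (n + 1) dom' T' pos' := by
  classical
  obtain ⟨r, hr⟩ := hC0.2.1.1
  have hex : ∀ a, ∃ S : Set V, (S ⊆ C0 ∧ r ∈ S ∧ (∀ x ∈ S, ∃ L, WIn G w S r x L) ∧
      ∀ x ∈ S, ∀ y ∈ S, WIn G w C0 x y |dst G w C0 r x - dst G w C0 r y|) ∧
      (a ∈ KK G own C0 → ∃ v ∈ S, ∃ u, u ∉ U ∧ own u = a ∧ G.Adj v u) := by
    intro a
    by_cases ha : a ∈ KK G own C0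
    · obtain ⟨u, hu, rfl⟩ := id ha
      have huU := hC0.2.2 u hu
      obtain ⟨_, v, hv, hvu⟩ := hu
      obtain ⟨S, h1, h2, h3, h4, h5⟩ := exists_geodesic hw hC0.2.1 hr hv
      exact ⟨S, ⟨h1, h2, h4, h5⟩, fun _ => ⟨v, h3, u, huU, rfl, hvu⟩⟩
    · refine ⟨{r}, ⟨by simpa using hr, rfl, ?_, ?_⟩, fun h => absurd h ha⟩
      · rintro x rfl; exact ⟨0, WIn.refl (Set.mem_singleton _) le_rfl⟩
      · rintro x rfl y rfl; exact WIn.refl hr (abs_nonneg _)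
  choose S hS hSa using hex
  set A : Set V := {v | ∃ a ∈ insert n (KK G own C0), v ∈ S a} with hAdef
  have hA : A ⊆ C0 := by rintro v ⟨a, _, hv⟩; exact (hS a).1 hv
  have hAU : A ⊆ U := hA.trans hC0.1
  have hrA : r ∈ A := ⟨n, Set.mem_insert _ _, (hS n).2.1⟩
  set own' : V → ℕ := fun v => if v ∈ A then n else own v with hown'
  have ho : ∀ v, v ∉ A → own' v = own v := fun v hv => by simp [hown', hv]
  have hoU : ∀ v, v ∉ U → own' v = own v := fun v hv => ho v fun h => hv (hAU h)
  have hoA : ∀ v ∈ A, own' v = n := fun v hv => by simp [hown', hv]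
  set dom' : ℕ → Set V := fun j => if j = n then C0 else dom j with hdom'
  set T' : ℕ → ℕ → Set V := fun j => if j = n then S else T j with hT'
  set pos' : ℕ → V → ℝ := fun j => if j = n then dst G w C0 r else pos j with hpos'
  have hdn : dom' n = C0 := by simp [hdom']
  have hTn : T' n = S := by simp [hT']
  have hpn : pos' n = dst G w C0 r := by simp [hpos']
  have hd : ∀ j < n, dom' j = dom j := fun j hj => by simp [hdom', hj.ne]
  have hT : ∀ j < n, T' j = T j := fun j hj => by simp [hT', hj.ne]
  have hp : ∀ j < n, pos' j = pos j := fun j hj => by simp [hpos', hj.ne]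
  have hSf : ∀ C j, j < n → Sett G w γ U own C j → Sett G w γ (U \ A) own' C j :=
    fun C j hj h => h.frame hC0 hA ho (fun v hv => Or.inr (hoA v hv)) hj
  have hK : ∀ b < n, KK G own' (dom' b) = KK G own (dom b) := fun b hb => by
    rw [hd b hb]
    exact KK_congr hA hC0.1 ho fun x hx => (I.dom_nb b hb x hx).1
  have hKn : KK G own' (dom' n) = KK G own C0 := by
    rw [hdn]; exact KK_congr hA hC0.1 ho hC0.2.2
  have hU' : ∀ v, v ∉ U \ A → v ∉ U ∨ v ∈ A := by
    intro v hv
    by_cases h : v ∈ A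
    · exact Or.inr h
    · exact Or.inl fun h' => hv ⟨h', h⟩
  have hlt : ∀ j < n + 1, j < n ∨ j = n := fun j hj => Nat.lt_succ_iff_lt_or_eq.1 hj
  have href : ∀ C', IsComp G w (U \ A) C' → ∃ C, IsComp G w U C ∧ C' ⊆ C ∧
      ∀ u ∈ nb G C', (u ∈ nb G C ∧ own' u = own u) ∨ (u ∈ A ∧ C = C0) := by
    intro C' hC'
    obtain ⟨C, hC, hsub, hn⟩ := hC'.refine
    refine ⟨C, hC, hsub, fun u hu => ?_⟩
    rcases hn u hu with h | h
    · exact Or.inl ⟨h, hoU u (hC.2.2 u h)⟩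
    · exact Or.inr ⟨h.1, hC.eq hC0 h.2 (hA h.1)⟩
  have hradA : ∀ v ∈ A, ∀ m : ℕ, ∃ a ∈ insert n (KK G own C0), ∃ t ∈ S a,
      WIn G w C0 v t (γ * m) := by
    rintro v ⟨a, ha, hv⟩ m
    exact ⟨a, ha, v, hv, WIn.refl ((hS a).1 hv) (by positivity)⟩
  refine ⟨A, own', dom', T', pos', ⟨r, hrA⟩, hAU, ?_⟩
  constructor
  case own_lt =>
    intro v hv
    rcases hU' v hv with h | h
    · rw [hoU v h]; exact (I.own_lt v h).trans (Nat.lt_succ_self n)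
    · rw [hoA v h]; exact Nat.lt_succ_self n
  case own_dom =>
    intro v hv
    rcases hU' v hv with h | h
    · rw [hoU v h, hd _ (I.own_lt v h)]; exact I.own_dom v h
    · rw [hoA v h, hdn]; exact hA h
  case dom_nb =>
    intro j hj u hu
    rcases hlt j hj with hj | rfl
    · rw [hd j hj] at hu
      have := I.dom_nb j hj u hu
      rw [hoU u this.1]
      exact ⟨fun h => this.1 h.1, this.2⟩
    · rw [hdn] at hu
      have := hC0.2.2 u hu
      rw [hoU u this]
      exact ⟨fun h => this h.1, I.own_lt u this⟩
  case cls =>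
    intro j hj
    rcases hlt j hj with hj | rfl
    · have : {v | v ∉ U \ A ∧ own' v = j} = {v | v ∉ U ∧ own v = j} := by
        ext v
        constructor
        · rintro ⟨h1, h2⟩
          rcases hU' v h1 with h | h
          · exact ⟨h, by rw [← h2, hoU v h]⟩
          · rw [hoA v h] at h2; omega
        · rintro ⟨h1, h2⟩
          exact ⟨fun h => h1 h.1, by rw [hoU v h1, h2]⟩
      rw [this]; exact I.cls j hj
    · have : {v | v ∉ U \ A ∧ own' v = j} = A := by
        ext v
        constructor
        · rintro ⟨h1, h2⟩
          rcases hU' v h1 with h | h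
          · rw [hoU v h] at h2
            have := I.own_lt v h
            omega
          · exact h
        · intro h
          exact ⟨fun h' => h'.2 h, hoA v h⟩
      rw [this]
      have hto : ∀ v ∈ A, ∃ L, WIn G w A r v L := by
        rintro v ⟨a, ha, hv⟩
        obtain ⟨L, hL⟩ := (hS a).2.2.1 v hv
        have hsub : S a ⊆ A := fun y hy => ⟨a, ha, hy⟩
        exact ⟨L, hL.mono hsub le_rfl⟩
      refine ⟨⟨r, hrA⟩, fun u hu v hv => ?_⟩
      obtain ⟨L, hL⟩ := hto u hu
      obtain ⟨M, hM⟩ := hto v hv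
      exact ⟨_, hL.symm.trans hM⟩
  case clique =>
    intro C' hC' a ha b hb hab
    obtain ⟨C, hC, hsub, hn⟩ := href C' hC'
    have hcase : ∀ a ∈ KK G own' C', a ∈ KK G own C ∨ (a = n ∧ C = C0) := by
      rintro _ ⟨u, hu, rfl⟩
      rcases hn u hu with h | h
      · exact Or.inl ⟨u, h.1, h.2.symm⟩
      · exact Or.inr ⟨hoA u h.1, h.2⟩
    rcases hcase b hb with hb' | ⟨rfl, rfl⟩
    · have hbn := I.kk_lt hC hb'
      rw [hK b hbn]
      rcases hcase a ha with ha' | ⟨rfl, _⟩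
      · exact I.clique C hC a ha' b hb' hab
      · omega
    · rw [hKn]
      rcases hcase a ha with ha' | ⟨rfl, _⟩
      · exact ha'
      · omega
  case cliqued =>
    intro j hj a ha b hb hab
    rcases hlt j hj with hj | rfl
    · rw [hK j hj] at ha hb
      have hbn : b < n := by
        obtain ⟨u, hu, rfl⟩ := hb
        exact I.own_lt u (I.dom_nb j hj u hu).1
      rw [hK b hbn]
      exact I.cliqued j hj a ha b hb hab
    · rw [hKn] at ha hb
      rw [hK b (I.kk_lt hC0 hb)]
      exact I.clique C0 hC0 a ha b hb hab
  case adj =>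
    intro b hb a ha
    rcases hlt b hb with hb | rfl
    · rw [hK b hb] at ha
      obtain ⟨x, y, h1, h2, h3, h4, h5⟩ := I.adj b hb a ha
      exact ⟨x, y, fun h => h1 h.1, by rw [hoU x h1, h2], fun h => h3 h.1,
        by rw [hoU y h3, h4], h5⟩
    · rw [hKn] at ha
      obtain ⟨v, hv, u, hu, hua, hvu⟩ := hSa a ha
      have hvA : v ∈ A := ⟨a, Set.mem_insert_of_mem _ ha, hv⟩
      exact ⟨u, v, fun h => hu h.1, by rw [hoU u hu, hua], fun h => h.2 hvA, hoA v hvA, hvu.symm⟩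
  case absorbed =>
    intro b hb v hv hvU hlt'
    rcases hlt b hb with hb | rfl
    · rw [hK b hb]
      rcases hU' v hvU with h | h
      · rw [hoU v h] at hlt' ⊢
        rw [hd b hb] at hv
        exact I.absorbed b hb v hv h hlt'
      · rw [hoA v h] at hlt'; omega
    · rw [hdn] at hv
      rcases hU' v hvU with h | h
      · exact absurd (hC0.1 hv) h
      · rw [hoA v h] at hlt'; omega
  case sett =>
    intro b hb j hj
    rcases hlt b hb with hb | rfl
    · rw [hK b hb, hd b hb]
      rcases I.sett b hb j hj with h | h
      · exact Or.inl h
      · exact Or.inr (hSf _ j (hj.trans hb) h)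
    · rw [hKn, hdn]
      rcases hnv j hj with h | h
      · exact Or.inl h
      · exact Or.inr (hSf _ j hj h)
  case rad =>
    intro v hv
    rcases hU' v hv with h | h
    · have hl := I.own_lt v h
      rw [hoU v h, hK _ hl, hd _ hl, hT _ hl]
      exact I.rad v h
    · rw [hoA v h, hKn, hdn, hTn]
      exact hradA v h _
  case radC =>
    intro C' hC' v hv
    obtain ⟨C, hC, hsub, hn⟩ := href C' hC'
    rcases hn v hv with ⟨h, hov⟩ | ⟨h, rfl⟩
    · have hl := I.own_lt v (hC.2.2 v h)
      rw [hov, hK _ hl, hd _ hl, hT _ hl]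
      obtain ⟨a, ha, t, ht, hW⟩ := I.radC C hC v h
      refine ⟨a, ha, t, ht, hW.mono le_rfl ?_⟩
      apply mul_le_mul_of_nonneg_left _ hγ
      have : (KK G own (dom (own v)) ∩ {j | Sett G w γ U own C j}).ncard
          ≤ (KK G own (dom (own v)) ∩ {j | Sett G w γ (U \ A) own' C' j}).ncard := by
        apply Set.ncard_le_ncard _ ((KK_fin _ _).subset Set.inter_subset_left)
        rintro j ⟨hj1, hj2⟩
        refine ⟨hj1, (hSf C j ?_ hj2).anti hsub⟩
        obtain ⟨u, hu, rfl⟩ := hj1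
        exact I.own_lt u (I.dom_nb _ (I.own_lt v (hC.2.2 v h)) u hu).1
      exact_mod_cast this
    · rw [hoA v h, hKn, hdn, hTn]
      exact hradA v h _
  case lip =>
    intro j hj
    rcases hlt j hj with hj | rfl
    · rw [hd j hj, hp j hj]; exact I.lip j hj
    · rw [hdn, hpn]
      intro x y L h
      exact dst_lip hw hC0.2.1 hr h
  case geo =>
    intro j hj
    rcases hlt j hj with hj | rfl
    · rw [hd j hj, hp j hj, hT j hj]; exact I.geo j hj
    · rw [hdn, hpn, hTn]
      intro a
      exact (hS a).2.2.2
  case domsub =>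
    intro b hb a ha
    rcases hlt b hb with hb | rfl
    · rw [hK b hb] at ha
      have hal : a < n := by
        obtain ⟨u, hu, rfl⟩ := ha
        exact I.own_lt u (I.dom_nb b hb u hu).1
      rw [hd b hb, hd a hal]
      exact I.domsub b hb a ha
    · rw [hKn] at ha
      rw [hdn, hd a (I.kk_lt hC0 ha)]
      exact I.kk_sub hC0 ha
  case kcard =>
    intro b hb
    rcases hlt b hb with hb | rfl
    · rw [hK b hb]; exact I.kcard b hb
    · rw [hKn]; exact hd0

theorem inv_exists_aux [Fintype V] (hw : ∀ e, 0 ≤ w e) (hγ : 0 ≤ γ) {h : ℕ}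
    (hminor : ¬ HasCompleteMinor G h) (N : ℕ) :
    ∀ (U : Set V) (own : V → ℕ) (n : ℕ) (dom : ℕ → Set V) (T : ℕ → ℕ → Set V)
      (pos : ℕ → V → ℝ), U.ncard ≤ N → Inv G w γ (h - 2) U own n dom T pos →
    ∃ own n dom T pos, Inv G w γ (h - 2) ∅ own n dom T pos := by
  induction N with
  | zero =>
    intro U own n dom T pos hU I
    have : U = ∅ := by
      rw [← Set.ncard_eq_zero (Set.toFinite U)]; omega
    subst this
    exact ⟨_, _, _, _, _, I⟩
  | succ N ih =>
    intro U own n dom T pos hU I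
    by_cases hne : U.Nonempty
    swap
    · rw [Set.not_nonempty_iff_eq_empty] at hne
      subst hne
      exact ⟨_, _, _, _, _, I⟩
    have hdec : ∀ A : Set V, A.Nonempty → A ⊆ U → (U \ A).ncard ≤ N := by
      rintro A ⟨x, hx⟩ hA
      have : (U \ A).ncard < U.ncard :=
        Set.ncard_lt_ncard ⟨Set.sdiff_subset, fun h => (h (hA hx)).2 hx⟩ (Set.toFinite _)
      omega
    obtain ⟨x, hx⟩ := hne
    obtain ⟨C0, hC0, _⟩ := comp_exists (G := G) (w := w) hx
    by_cases hv : ∀ i < n, i ∈ KK G own C0 ∨ Sett G w γ U own C0 i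
    · have hc := I.kk_card hminor hC0
      obtain ⟨A, own', dom', T', pos', h1, h2, h3⟩ := I.create hw hγ hC0 (by omega) hv
      exact ih _ _ _ _ _ _ (hdec A h1 h2) h3
    · push Not at hv
      obtain ⟨i, hi, hi1, hi2⟩ := hv
      obtain ⟨A, own', h1, h2, h3⟩ := I.grow hw hγ hC0 hi hi1 hi2
      exact ih _ _ _ _ _ _ (hdec A h1 h2) h3

theorem inv_exists [Fintype V] (hw : ∀ e, 0 ≤ w e) (hγ : 0 ≤ γ) {h : ℕ}
    (hminor : ¬ HasCompleteMinor G h) :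
    ∃ own n dom T pos, Inv G w γ (h - 2) ∅ own n dom T pos := by
  refine inv_exists_aux hw hγ hminor _ Set.univ (fun _ => 0) 0 (fun _ => ∅) (fun _ _ => ∅)
    (fun _ _ => 0) le_rfl ?_
  have hcl : ∀ C, IsComp G w Set.univ C → ∀ v, v ∉ nb G C := fun C hC v hv =>
    hC.2.2 v hv (Set.mem_univ v)
  constructor
  case clique =>
    rintro C hC a ⟨u, hu, _⟩
    exact absurd hu (hcl C hC u)
  case radC =>
    intro C hC v hv
    exact absurd hv (hcl C hC v)
  all_goals simp

end Create

section Count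

/-- hierarchical reachability -/
def HR (K : ℕ → Finset ℕ) : ℕ → ℕ → ℕ → Prop
  | 0, Z, Y => Y = Z
  | m + 1, Z, Y => Y = Z ∨ (Y < Z ∧ ∃ Z' ∈ K Z, Y ≤ Z' ∧ (∀ a ∈ K Z, Y ≤ a → Z' ≤ a) ∧
      HR K m Z' Y)

open Classical in
/-- reached labels with at least `j` predecessors -/
noncomputable def SS (K : ℕ → Finset ℕ) (m Z j : ℕ) : Finset ℕ :=
  (Finset.range (Z + 1)).filter fun Y => HR K m Z Y ∧ j ≤ ((K Z).filter (· < Y)).card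

theorem mem_SS {K : ℕ → Finset ℕ} {m Z j Y : ℕ} : Y ∈ SS K m Z j ↔
    Y ≤ Z ∧ HR K m Z Y ∧ j ≤ ((K Z).filter (· < Y)).card := by
  simp [SS, Nat.lt_succ_iff]

theorem SS_step {K : ℕ → Finset ℕ} (hlt : ∀ Z, ∀ a ∈ K Z, a < Z)
    (hcl : ∀ Z, ∀ a ∈ K Z, ∀ b ∈ K Z, a < b → a ∈ K b) (m Z j : ℕ) :
    (SS K (m + 1) Z j).card ≤ 1 ∨
      ∃ Z', (SS K (m + 1) Z j).card ≤ (SS K (m + 1) Z (j + 1)).card + (SS K m Z' j).card := by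
  classical
  by_cases hs : (K Z).card ≤ j
  · left
    rw [← Finset.card_singleton Z]
    apply Finset.card_le_card
    intro Y hY
    obtain ⟨h1, h2, h3⟩ := mem_SS.1 hY
    rcases h2 with rfl | ⟨hYZ, Z', hZ', hYZ', _⟩
    · simp
    · exfalso
      have : ((K Z).filter (· < Y)).card < (K Z).card := by
        apply Finset.card_lt_card
        refine ⟨Finset.filter_subset _ _, fun h => ?_⟩
        have := (Finset.mem_filter.1 (h hZ')).2
        omega
      omega
  · right
    push Not at hs
    set E := (SS K (m + 1) Z j).filter fun Y => ((K Z).filter (· < Y)).card = j with hE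
    have hsplit : SS K (m + 1) Z j ⊆ SS K (m + 1) Z (j + 1) ∪ E := by
      intro Y hY
      obtain ⟨h1, h2, h3⟩ := mem_SS.1 hY
      rw [Finset.mem_union]
      rcases h3.eq_or_lt with h | h
      · right; exact Finset.mem_filter.2 ⟨hY, h.symm⟩
      · left; exact mem_SS.2 ⟨h1, h2, h⟩
    have hEdat : ∀ Y ∈ E, Y < Z ∧ ((K Z).filter (· < Y)).card = j ∧
        ∃ Z' ∈ K Z, Y ≤ Z' ∧ (∀ a ∈ K Z, Y ≤ a → Z' ≤ a) ∧ HR K m Z' Y := by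
      intro Y hY
      obtain ⟨hY, hc⟩ := Finset.mem_filter.1 hY
      obtain ⟨h1, h2, h3⟩ := mem_SS.1 hY
      rcases h2 with rfl | ⟨hYZ, h⟩
      · exfalso
        rw [Finset.filter_true_of_mem (fun a ha => hlt _ a ha)] at hc
        omega
      · exact ⟨hYZ, hc, h⟩
    suffices h : ∃ Z', E ⊆ SS K m Z' j by
      obtain ⟨Z', hZ'⟩ := h
      exact ⟨Z', (Finset.card_le_card hsplit).trans ((Finset.card_union_le _ _).trans
        (Nat.add_le_add_left (Finset.card_le_card hZ') _))⟩
    by_cases hEe : E.Nonempty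
    swap
    · rw [Finset.not_nonempty_iff_eq_empty] at hEe
      exact ⟨0, by simp [hEe]⟩
    obtain ⟨Y0, hY0⟩ := hEe
    obtain ⟨hlt0, hc0, Z0, hZ0, hYZ0, hmin0, _⟩ := hEdat Y0 hY0
    refine ⟨Z0, fun Y hY => ?_⟩
    obtain ⟨hltY, hcY, Z1, hZ1, hYZ1, hmin1, hHR⟩ := hEdat Y hY
    have hsame : (K Z).filter (· < Y) = (K Z).filter (· < Y0) := by
      rcases le_total Y Y0 with h | h
      · apply Finset.eq_of_subset_of_card_le
        · exact Finset.monotone_filter_right _ (fun a _ ha => lt_of_lt_of_le ha h)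
        · omega
      · symm
        apply Finset.eq_of_subset_of_card_le
        · exact Finset.monotone_filter_right _ (fun a _ ha => lt_of_lt_of_le ha h)
        · omega
    have hiff : ∀ a ∈ K Z, a < Y ↔ a < Y0 := by
      intro a ha
      have := Finset.ext_iff.1 hsame a
      simpa [ha] using this
    have h01 : Z1 = Z0 := by
      apply le_antisymm
      · apply hmin1 _ hZ0
        have := hiff _ hZ0
        omega
      · apply hmin0 _ hZ1
        have := hiff _ hZ1
        omega
    subst h01
    refine mem_SS.2 ⟨hYZ1, hHR, ?_⟩
    rw [← hcY]
    apply Finset.card_le_card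
    intro a ha
    obtain ⟨ha, haY⟩ := Finset.mem_filter.1 ha
    exact Finset.mem_filter.2 ⟨hcl Z a ha Z1 hZ1 (by omega), haY⟩

theorem SS_card {K : ℕ → Finset ℕ} {d : ℕ} (hlt : ∀ Z, ∀ a ∈ K Z, a < Z)
    (hcl : ∀ Z, ∀ a ∈ K Z, ∀ b ∈ K Z, a < b → a ∈ K b) (hd : ∀ Z, (K Z).card ≤ d) (m : ℕ) :
    ∀ e j Z, d = e + j → (SS K m Z j).card ≤ (m + e).choose e := by
  induction m with
  | zero =>
    intro e j Z _
    rw [Nat.zero_add, Nat.choose_self, ← Finset.card_singleton Z]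
    apply Finset.card_le_card
    intro Y hY
    have := (mem_SS.1 hY).2.1
    simpa [HR] using this
  | succ m ih =>
    intro e
    induction e with
    | zero =>
      intro j Z hj
      rcases SS_step hlt hcl m Z j with h | ⟨Z', h⟩
      · simpa using h
      · have h1 : SS K (m + 1) Z (j + 1) = ∅ := by
          rw [Finset.eq_empty_iff_forall_notMem]
          intro Y hY
          have h2 := (mem_SS.1 hY).2.2
          have h3 := Finset.card_filter_le (K Z) (· < Y)
          have := hd Z
          omega
        have h2 := ih 0 j Z' hj
        rw [h1] at h
        simp at h h2 ⊢
        omega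
    | succ e ihe =>
      intro j Z hj
      rcases SS_step hlt hcl m Z j with h | ⟨Z', h⟩
      · exact h.trans (Nat.choose_pos (by omega))
      · have h1 := ihe (j + 1) Z (by omega)
        have h2 := ih (e + 1) j Z' hj
        have h3 : (m + 1 + (e + 1)).choose (e + 1)
            = (m + 1 + e).choose e + (m + (e + 1)).choose (e + 1) := by
          rw [show m + 1 + (e + 1) = (m + 1 + e) + 1 by ring, Nat.choose_succ_succ,
            show m + (e + 1) = m + 1 + e by ring]
        omega

end Count

section Static

variable {G : SimpleGraph V} {w : Sym2 V → ℝ}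
variable {γ : ℝ} {d n : ℕ} {own : V → ℕ} {dom : ℕ → Set V} {T : ℕ → ℕ → Set V}
  {pos : ℕ → V → ℝ}

theorem Inv.far (hw : ∀ e, 0 ≤ w e) (I : Inv G w γ d ∅ own n dom T pos) {i j : ℕ} (hij : i < j)
    (hj : j < n) (hK : i ∉ KK G own (dom j)) {x v : V} (hx : x ∈ dom j) {L : ℝ}
    (h : WIn G w {u | i ≤ own u} x v L) (hv : own v = i) : γ ≤ L := by
  rcases I.sett j hj i hij with h1 | ⟨H, h1, h2, h3, h4, h5⟩
  · exact absurd h1 hK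
  · obtain ⟨x', y, L0, L2, hx', hy, hxy, hW0, hW2, hL⟩ :=
      h.exit (H := H) (h1 hx) (fun hvH => h3 v hvH (Set.notMem_empty _) hv)
    have hyn : y ∈ nb G H := ⟨hy, x', hx', hxy⟩
    have hiy : i < own y := lt_of_le_of_ne hW2.left_mem (h4 y hyn).symm
    have := h5 x hx x' hx' y hyn hiy hxy L0 (hW0.mono Set.inter_subset_left le_rfl)
    have := hW2.nonneg hw
    linarith

open Classical in
/-- finset version of the boundary labels -/
noncomputable def KF [Fintype V] (G : SimpleGraph V) (own : V → ℕ) (dom : ℕ → Set V) (n b : ℕ) :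
    Finset ℕ :=
  if b < n then (KK_fin (G := G) own (dom b)).toFinset else ∅

theorem mem_KF [Fintype V] {a b : ℕ} : a ∈ KF G own dom n b ↔ b < n ∧ a ∈ KK G own (dom b) := by
  unfold KF
  split_ifs with h <;> simp [h]

theorem exists_min_K {K : Finset ℕ} {Y a : ℕ} (ha : a ∈ K) (hY : Y ≤ a) :
    ∃ Z ∈ K, Y ≤ Z ∧ (∀ a ∈ K, Y ≤ a → Z ≤ a) ∧ Z ≤ a := by
  obtain ⟨Z, hZ, hmin⟩ := (K.filter (Y ≤ ·)).exists_min_image id ⟨a, by simp [ha, hY]⟩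
  simp at hZ hmin
  exact ⟨Z, hZ.1, hZ.2, hmin, hmin a ha hY⟩

theorem Inv.hop [Fintype V] (hw : ∀ e, 0 ≤ w e)
    (I : Inv G w γ d ∅ own n dom T pos) (m : ℕ) :
    ∀ (Z Y : ℕ) (x v : V) (L : ℝ), Z < n → Y ≤ Z → x ∈ dom Z → WIn G w {u | Y ≤ own u} x v L →
      own v = Y → L < m * γ → HR (KF G own dom n) (2 * m) Z Y := by
  have hab : ∀ b < n, ∀ y, own y < b → (y ∈ dom b ∨ ∃ z ∈ dom b, G.Adj z y) →
      own y ∈ KK G own (dom b) := by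
    intro b hb y hyb h
    by_cases hy : y ∈ dom b
    · exact I.absorbed b hb y hy (Set.notMem_empty _) hyb
    · rcases h with h | ⟨z, hz, hzy⟩
      · exact absurd h hy
      · exact ⟨y, ⟨hy, z, hz, hzy⟩, rfl⟩
  have hkl : ∀ b < n, ∀ a ∈ KK G own (dom b), a < b := by
    rintro b hb _ ⟨u, hu, rfl⟩
    exact (I.dom_nb b hb u hu).2
  induction m with
  | zero =>
    intro Z Y x v L _ _ _ h _ hL
    have := h.nonneg hw
    simp at hL
    linarith
  | succ m ih =>
    intro Z Y x v L hZ hYZ hx h hv hL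
    rcases hYZ.eq_or_lt with rfl | hlt
    · exact Or.inl rfl
    have hex : ∃ a ∈ KF G own dom n Z, Y ≤ a := by
      by_cases hvd : v ∈ dom Z
      · exact ⟨Y, mem_KF.2 ⟨hZ, hv ▸ hab Z hZ v (hv ▸ hlt) (Or.inl hvd)⟩, le_rfl⟩
      · obtain ⟨x', y, L0, L2, hx', hy, hxy, hW0, hW2, hL⟩ := h.exit hx hvd
        exact ⟨own y, mem_KF.2 ⟨hZ, y, ⟨hy, x', hx', hxy⟩, rfl⟩, hW2.left_mem⟩
    obtain ⟨a, ha, hYa⟩ := hex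
    obtain ⟨Z1, hZ1, hYZ1, hmin1, _⟩ := exists_min_K ha hYa
    refine Or.inr ⟨hlt, Z1, hZ1, hYZ1, hmin1, ?_⟩
    have hZ1' := (mem_KF.1 hZ1).2
    have hZ1Z := hkl Z hZ Z1 hZ1'
    have hxZ1 := I.domsub Z hZ Z1 hZ1' hx
    rcases hYZ1.eq_or_lt with rfl | hlt1
    · exact Or.inl rfl
    have hox : Z1 ≤ own x := by
      by_contra hcon
      push Not at hcon
      have := hmin1 (own x) (mem_KF.2 ⟨hZ, hab Z hZ x (by omega) (Or.inl hx)⟩) h.left_mem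
      omega
    obtain ⟨x', y, L0, L2, hx', hy, hxy, hW0, hW2, hLL⟩ :=
      h.exit (H := {u | Z1 ≤ own u}) hox (by simp only [Set.mem_setOf_eq]; omega)
    have hyY : Y ≤ own y := hW2.left_mem
    simp only [Set.mem_setOf_eq, not_le] at hx' hy
    have hx'd : x' ∈ dom Z1 := by
      have h1 := hW0.mono Set.inter_subset_left le_rfl
      have h2 := h1.stay (D := dom Z1) hxZ1 (fun u hu hcon => by
        have := (I.dom_nb Z1 (by omega) u hu).2
        simp only [Set.mem_setOf_eq] at hcon
        omega)
      exact h2.right_mem.1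
    have hyK := hab Z1 (by omega) y hy (Or.inr ⟨x', hx'd, hxy⟩)
    have hyK' : own y ∉ KK G own (dom Z) := by
      intro hcon
      have := hmin1 _ (mem_KF.2 ⟨hZ, hcon⟩) hyY
      omega
    have hγ : γ ≤ L0 + w s(x', y) := by
      refine I.far hw (hy.trans hZ1Z) hZ hyK' hx (v := y) ?_ rfl
      have h1 : WIn G w {u | own y ≤ own u} x x' L0 := hW0.mono (fun u hu => by
        have := hu.1
        simp only [Set.mem_setOf_eq] at this ⊢
        omega) le_rfl
      exact h1.trans (WIn.adj h1.right_mem (by simp) hxy)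
    obtain ⟨Z2, hZ2, hYZ2, hmin2, hZ2y⟩ := exists_min_K (mem_KF.2 ⟨(by omega : Z1 < n), hyK⟩) hyY
    refine Or.inr ⟨hlt1, Z2, hZ2, hYZ2, hmin2, ?_⟩
    have hyd : y ∈ dom Z2 := by
      have h1 := I.own_dom y (Set.notMem_empty _)
      rcases hZ2y.eq_or_lt with h2 | h2
      · rw [h2]; exact h1
      · exact I.domsub (own y) (by omega) Z2
          (I.cliqued Z1 (by omega) Z2 (mem_KF.1 hZ2).2 (own y) hyK h2) h1
    refine ih Z2 Y y v L2 (by omega) hYZ2 hyd hW2 hv ?_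
    push_cast at hL
    linarith

theorem Inv.reach_card [Fintype V] (hw : ∀ e, 0 ≤ w e)
    (I : Inv G w γ d ∅ own n dom T pos) {M : ℕ} {r : ℝ} (hM : r < M * γ) (p : V) :
    {i | ∃ y, own y = i ∧ WIn G w {u | i ≤ own u} p y r}.Finite ∧
    {i | ∃ y, own y = i ∧ WIn G w {u | i ≤ own u} p y r}.ncard ≤ (2 * M + d).choose d := by
  have hp := I.own_lt p (Set.notMem_empty _)
  have hsub : {i | ∃ y, own y = i ∧ WIn G w {u | i ≤ own u} p y r} ⊆
      (SS (KF G own dom n) (2 * M) (own p) 0 : Set ℕ) := by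
    rintro i ⟨y, hy, hW⟩
    refine mem_SS.2 ⟨hW.left_mem, ?_, Nat.zero_le _⟩
    exact I.hop hw M _ _ p y r hp hW.left_mem (I.own_dom p (Set.notMem_empty _)) hW hy hM
  refine ⟨(Finset.finite_toSet _).subset hsub, ?_⟩
  refine (Set.ncard_le_ncard hsub (Finset.finite_toSet _)).trans ?_
  rw [Set.ncard_coe_finset]
  refine SS_card (d := d) ?_ ?_ ?_ _ d 0 _ rfl
  · intro Z a ha
    obtain ⟨hZ, u, hu, rfl⟩ := mem_KF.1 ha
    exact (I.dom_nb Z hZ u hu).2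
  · intro Z a ha b hb hab
    obtain ⟨hZ, ha⟩ := mem_KF.1 ha
    obtain ⟨hZ, hb⟩ := mem_KF.1 hb
    refine mem_KF.2 ⟨?_, I.cliqued Z hZ a ha b hb hab⟩
    obtain ⟨u, hu, rfl⟩ := hb
    exact I.own_lt u (Set.notMem_empty _)
  · intro Z
    by_cases hZ : Z < n
    · have := I.kcard Z hZ
      rw [Set.ncard_eq_toFinset_card _ (KK_fin _ _)] at this
      simpa [KF, hZ] using this
    · simp [KF, hZ]

end Static

section Hubs

variable {G : SimpleGraph V} {w : Sym2 V → ℝ}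

theorem WIn.split_min {p x : V} {L : ℝ} (own : V → ℕ) (h : WIn G w Set.univ p x L) :
    ∃ y L1 L2, WIn G w {u | own y ≤ own u} p y L1 ∧ WIn G w {u | own y ≤ own u} y x L2 ∧
      L1 + L2 ≤ L := by
  classical
  obtain ⟨q, _, hL⟩ := h
  obtain ⟨y, hy, hmin⟩ := q.support.toFinset.exists_min_image own
    ⟨p, by simp⟩
  simp only [List.mem_toFinset] at hy hmin
  obtain ⟨s, s', hs⟩ := (q.mem_support_iff_exists_append).1 hy
  refine ⟨y, wt w s, wt w s', ⟨s, fun z hz => hmin z ?_, le_rfl⟩,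
    ⟨s', fun z hz => hmin z ?_, le_rfl⟩, ?_⟩
  · rw [hs]; exact (SimpleGraph.Walk.mem_support_append_iff _ _).2 (Or.inl hz)
  · rw [hs]; exact (SimpleGraph.Walk.mem_support_append_iff _ _).2 (Or.inr hz)
  · rw [← wt_append, ← hs]; exact hL

theorem hubs [Fintype V] [Nonempty V] (hw : ∀ e, 0 ≤ w e) {h : ℕ} (hh : 2 ≤ h)
    (hminor : ¬ HasCompleteMinor G h) {ε r : ℝ} (hε : 0 < ε) (hr : 0 < r) :
    ∃ (H : V → Finset (ℕ × ℕ × ℤ)) (rep : ℕ × ℕ × ℤ → V),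
      (∀ p, (H p).card ≤ (2 * ⌈36 * (h : ℝ) / ε⌉₊ + (h - 2)).choose (h - 2) *
        ((h - 1) * ⌊48 / ε + 4⌋₊)) ∧
      ∀ p x, WIn G w Set.univ p x r → ∃ z ∈ H p, z ∈ H x ∧ ∃ L1 L2,
        WIn G w Set.univ p (rep z) L1 ∧ WIn G w Set.univ (rep z) x L2 ∧
        L1 + L2 ≤ r + ε * r / 6 := by
  classical
  have hh0 : (0 : ℝ) < h := by
    have : 0 < h := by omega
    exact_mod_cast this
  set Δ : ℝ := ε * r / 24 with hΔ
  have hΔ0 : 0 < Δ := by positivity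
  set γ : ℝ := Δ / h with hγ
  have hγ0 : 0 < γ := by positivity
  set M := ⌈36 * (h : ℝ) / ε⌉₊ with hM
  have hMγ : r < M * γ := by
    have h1 : 36 * (h : ℝ) / ε ≤ M := Nat.le_ceil _
    have h2 : 36 * (h : ℝ) / ε * γ ≤ M * γ := by gcongr
    have h3 : 36 * (h : ℝ) / ε * γ = 3 / 2 * r := by
      rw [hγ, hΔ]; field_simp; ring
    linarith
  obtain ⟨own, n, dom, T, pos, I⟩ := inv_exists (G := G) (w := w) hw hγ0.le hminor
  have hne : ∀ v : V, v ∉ (∅ : Set V) := fun v => Set.notMem_empty v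
  let R : V → Finset ℕ := fun p => (I.reach_card hw hMγ p).1.toFinset
  have hR : ∀ p i, i ∈ R p ↔ ∃ y, own y = i ∧ WIn G w {u | i ≤ own u} p y r := by
    intro p i
    exact (Set.Finite.mem_toFinset _)
  have hRc : ∀ p, (R p).card ≤ (2 * M + (h - 2)).choose (h - 2) := by
    intro p
    have := (I.reach_card hw hMγ p).2
    rwa [Set.ncard_eq_toFinset_card _ (I.reach_card hw hMγ p).1] at this
  let J : V → ℕ → Finset ℤ := fun p i =>
    Finset.Icc ⌊(pos i p - r - Δ) / Δ⌋ ⌊(pos i p + r + Δ) / Δ⌋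
  have hJ : ∀ p i, (J p i).card ≤ ⌊48 / ε + 4⌋₊ := by
    intro p i
    apply Nat.le_floor
    have h1 : ((J p i).card : ℤ) = (⌊(pos i p + r + Δ) / Δ⌋ + 1 - ⌊(pos i p - r - Δ) / Δ⌋) := by
      rw [Int.card_Icc, Int.toNat_of_nonneg]
      have : ⌊(pos i p - r - Δ) / Δ⌋ ≤ ⌊(pos i p + r + Δ) / Δ⌋ := by
        apply Int.floor_le_floor
        gcongr
        linarith
      linarith
    have h2 : ((J p i).card : ℝ)
        = (⌊(pos i p + r + Δ) / Δ⌋ : ℝ) + 1 - ⌊(pos i p - r - Δ) / Δ⌋ := by exact_mod_cast h1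
    have h3 := Int.floor_le ((pos i p + r + Δ) / Δ)
    have h4 := Int.lt_floor_add_one ((pos i p - r - Δ) / Δ)
    have h5 : (pos i p + r + Δ) / Δ - (pos i p - r - Δ) / Δ = 48 / ε + 2 := by
      rw [hΔ]; field_simp; ring
    rw [h2]; linarith
  let H : V → Finset (ℕ × ℕ × ℤ) := fun p =>
    (R p).biUnion fun i => (insert i (KF G own dom n i)).biUnion fun a =>
      (J p i).image fun β => (i, a, β)
  have hrep : ∀ z : ℕ × ℕ × ℤ, ∃ t : V, (∃ t ∈ T z.1 z.2.1, ⌊pos z.1 t / Δ⌋ = z.2.2) →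
      t ∈ T z.1 z.2.1 ∧ ⌊pos z.1 t / Δ⌋ = z.2.2 := by
    intro z
    by_cases hz : ∃ t ∈ T z.1 z.2.1, ⌊pos z.1 t / Δ⌋ = z.2.2
    · obtain ⟨t, ht⟩ := hz
      exact ⟨t, fun _ => ht⟩
    · exact ⟨Classical.arbitrary V, fun h => absurd h hz⟩
  choose rep hrep using hrep
  refine ⟨H, rep, ?_, ?_⟩
  · intro p
    have h1 : (H p).card ≤ (R p).card * ((h - 1) * ⌊48 / ε + 4⌋₊) := by
      refine Finset.card_biUnion_le_card_mul _ _ _ fun i hi => ?_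
      have h2 : (insert i (KF G own dom n i)).card ≤ h - 1 := by
        refine (Finset.card_insert_le _ _).trans ?_
        have : (KF G own dom n i).card ≤ h - 2 := by
          by_cases hi : i < n
          · have := I.kcard i hi
            rw [Set.ncard_eq_toFinset_card _ (KK_fin _ _)] at this
            simpa [KF, hi] using this
          · simp [KF, hi]
        omega
      refine (Finset.card_biUnion_le_card_mul _ _ ⌊48 / ε + 4⌋₊ fun a ha => ?_).trans
        (Nat.mul_le_mul_right _ h2)
      exact Finset.card_image_le.trans (hJ p i)
    exact h1.trans (Nat.mul_le_mul_right _ (hRc p))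
  · intro p x hpx
    obtain ⟨y, L1, L2, hW1, hW2, hL⟩ := hpx.split_min own
    have hL1 := hW1.nonneg hw
    have hL2 := hW2.nonneg hw
    have hin := I.own_lt y (hne y)
    have hyd := I.own_dom y (hne y)
    obtain ⟨a, ha, t, ht, hWt⟩ := I.rad y (hne y)
    set i := own y with hi
    have hWt' : WIn G w (dom i) y t Δ := by
      refine hWt.mono le_rfl ?_
      have h1 : ((KK G own (dom i)).ncard : ℝ) ≤ h := by
        have := I.kcard i hin
        have : (KK G own (dom i)).ncard ≤ h := by omega
        exact_mod_cast this
      calc γ * (KK G own (dom i)).ncard ≤ γ * h := by gcongr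
        _ = Δ := by rw [hγ]; field_simp
    have hstay : ∀ {v : V} {L : ℝ}, WIn G w {u | i ≤ own u} y v L → WIn G w (dom i) y v L := by
      intro v L hv
      refine (hv.stay hyd fun u hu hcon => ?_).mono Set.inter_subset_left le_rfl
      have := (I.dom_nb i hin u hu).2
      have hcon' : i ≤ own u := hcon
      omega
    set z : ℕ × ℕ × ℤ := (i, a, ⌊pos i t / Δ⌋) with hz
    obtain ⟨hrT, hrfl⟩ := hrep z ⟨t, ht, rfl⟩
    have hWr : WIn G w (dom i) t (rep z) Δ := by
      refine (I.geo i hin a t ht (rep z) hrT).mono le_rfl ?_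
      have h1 := Int.floor_le (pos i t / Δ)
      have h2 := Int.lt_floor_add_one (pos i t / Δ)
      have h3 := Int.floor_le (pos i (rep z) / Δ)
      have h4 := Int.lt_floor_add_one (pos i (rep z) / Δ)
      have h5 : ⌊pos i (rep z) / Δ⌋ = ⌊pos i t / Δ⌋ := hrfl
      rw [h5] at h3 h4
      rw [le_div_iff₀ hΔ0] at h1 h3
      rw [div_lt_iff₀ hΔ0] at h2 h4
      rw [abs_le]
      constructor <;> linarith
    have hmem : ∀ v L, L ≤ r → WIn G w {u | i ≤ own u} y v L → z ∈ H v := by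
      intro v L hLr hv
      have hl := I.lip i hin v t _ ((hstay hv).symm.trans hWt')
      rw [abs_le] at hl
      refine Finset.mem_biUnion.2 ⟨i, (hR v i).2 ⟨y, rfl, hv.symm.mono le_rfl hLr⟩, ?_⟩
      refine Finset.mem_biUnion.2 ⟨a, ?_, ?_⟩
      · rcases ha with ha | ha
        · rw [ha]; exact Finset.mem_insert_self _ _
        · exact Finset.mem_insert_of_mem (mem_KF.2 ⟨hin, ha⟩)
      · refine Finset.mem_image.2 ⟨⌊pos i t / Δ⌋, Finset.mem_Icc.2 ⟨?_, ?_⟩, rfl⟩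
        · apply Int.floor_le_floor
          gcongr
          linarith
        · apply Int.floor_le_floor
          gcongr
          linarith
    refine ⟨z, hmem p L1 (by linarith) hW1.symm, hmem x L2 (by linarith) hW2,
      L1 + Δ + Δ, Δ + Δ + L2, ?_, ?_, ?_⟩
    · exact (((hstay hW1.symm).symm.trans hWt').trans hWr).mono (Set.subset_univ _) le_rfl
    · exact ((hWr.symm.trans hWt'.symm).trans (hstay hW2)).mono (Set.subset_univ _) le_rfl
    · have : 4 * Δ = ε * r / 6 := by rw [hΔ]; ring
      linarith

end Hubs

section Hit

theorem hit {α β : Type} [DecidableEq β] (K N : ℕ) (hN1 : K + 1 ≤ N) (a : ℕ) :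
    K * a ≤ N → ∀ (P : Finset α) (A : α → Finset β), (∀ p ∈ P, (A p).card ≤ a) →
    ∃ S ⊆ P, S.card ≤ N ^ a ∧ ∀ B : Finset β, B.card ≤ K →
      (∀ s ∈ S, (A s ∩ B).Nonempty) → ∀ p ∈ P, (A p ∩ B).Nonempty := by
  classical
  have hsingle : ∀ (a : ℕ) (P : Finset α) (A : α → Finset β), (∃ p ∈ P, A p = ∅) →
      ∃ S ⊆ P, S.card ≤ N ^ a ∧ ∀ B : Finset β, B.card ≤ K →
      (∀ s ∈ S, (A s ∩ B).Nonempty) → ∀ p ∈ P, (A p ∩ B).Nonempty := by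
    rintro a P A ⟨p, hp, he⟩
    refine ⟨{p}, by simpa using hp, by simpa using Nat.one_le_pow _ _ (by omega), ?_⟩
    intro B _ h
    have := h p (by simp)
    rw [he] at this
    simp at this
  induction a with
  | zero =>
    intro _ P A hA
    rcases P.eq_empty_or_nonempty with rfl | ⟨p, hp⟩
    · exact ⟨∅, by simp, by simp, by simp⟩
    · exact hsingle 0 P A ⟨p, hp, Finset.card_eq_zero.1 (Nat.le_zero.1 (hA p hp))⟩
  | succ a ih =>
    intro hN P A hA
    by_cases hemp : ∃ p ∈ P, A p = ∅
    · exact hsingle _ P A hemp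
    push Not at hemp
    let Dj : Finset (Finset α) := P.powerset.filter fun T => (T : Set α).PairwiseDisjoint A
    by_cases hbig : ∃ T ∈ Dj, K + 1 ≤ T.card
    · obtain ⟨T, hT, hTc⟩ := hbig
      obtain ⟨T', hT', hc'⟩ := Finset.exists_subset_card_eq hTc
      obtain ⟨hTP, hTd⟩ := Finset.mem_filter.1 hT
      rw [Finset.mem_powerset] at hTP
      refine ⟨T', hT'.trans hTP, ?_, ?_⟩
      · rw [hc']
        exact hN1.trans (Nat.le_self_pow (by omega) _)
      · intro B hB h
        exfalso
        have hne' : Nonempty β := by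
          obtain ⟨s, hs⟩ := Finset.card_pos.1 (show 0 < T'.card by omega)
          obtain ⟨x, _⟩ := h s hs
          exact ⟨x⟩
        choose! f hf using h
        have hcard : T'.card ≤ B.card := by
          apply Finset.card_le_card_of_injOn f
          · intro s hs
            exact (Finset.mem_inter.1 (hf s hs)).2
          · intro s hs t ht hst
            by_contra hne
            have hd := hTd (hT' hs) (hT' ht) hne
            exact Finset.disjoint_left.1 hd (Finset.mem_inter.1 (hf s hs)).1
              (hst ▸ (Finset.mem_inter.1 (hf t ht)).1)
        omega
    · push Not at hbig
      obtain ⟨T, hT, hmax⟩ := Dj.exists_max_image Finset.card ⟨∅, by simp [Dj]⟩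
      obtain ⟨hTP, hTd⟩ := Finset.mem_filter.1 hT
      rw [Finset.mem_powerset] at hTP
      have hTc := hbig T hT
      set U0 := T.biUnion A with hU0
      have hU0c : U0.card ≤ N := by
        refine (Finset.card_biUnion_le_card_mul _ _ (a + 1) fun p hp => hA p (hTP hp)).trans ?_
        exact (Nat.mul_le_mul_right _ (by omega)).trans hN
      have hmeet : ∀ p ∈ P, ∃ u ∈ U0, u ∈ A p := by
        intro p hp
        by_contra hcon
        push Not at hcon
        have hpT : p ∉ T := by
          intro hpT
          obtain ⟨u, hu⟩ := hemp p hp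
          exact hcon u (Finset.mem_biUnion.2 ⟨p, hpT, hu⟩) hu
        have hins : insert p T ∈ Dj := by
          refine Finset.mem_filter.2 ⟨Finset.mem_powerset.2 (Finset.insert_subset hp hTP), ?_⟩
          rw [Finset.coe_insert]
          refine hTd.insert fun q hq hne => ?_
          rw [Finset.disjoint_left]
          intro u hu hu'
          exact hcon u (Finset.mem_biUnion.2 ⟨q, hq, hu'⟩) hu
        have := hmax _ hins
        rw [Finset.card_insert_of_notMem hpT] at this
        omega
      have hrec : ∀ u, ∃ S ⊆ P.filter (fun p => u ∈ A p), S.card ≤ N ^ a ∧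
          ∀ B : Finset β, B.card ≤ K → (∀ s ∈ S, ((A s).erase u ∩ B).Nonempty) →
          ∀ p ∈ P.filter (fun p => u ∈ A p), ((A p).erase u ∩ B).Nonempty := by
        intro u
        refine ih ((Nat.mul_le_mul_left _ (Nat.le_succ a)).trans hN) _ (fun p => (A p).erase u) ?_
        intro p hp
        obtain ⟨hp, hu⟩ := Finset.mem_filter.1 hp
        have := hA p hp
        rw [Finset.card_erase_of_mem hu]
        omega
      choose S hSP hSc hS using hrec
      refine ⟨U0.biUnion S, ?_, ?_, ?_⟩
      · intro s hs
        obtain ⟨u, _, hs⟩ := Finset.mem_biUnion.1 hs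
        exact (Finset.mem_filter.1 (hSP u hs)).1
      · refine (Finset.card_biUnion_le_card_mul _ _ (N ^ a) fun u _ => hSc u).trans ?_
        rw [pow_succ, mul_comm]
        exact Nat.mul_le_mul_left _ hU0c
      · intro B hB hhit p hp
        obtain ⟨u, hu, hup⟩ := hmeet p hp
        by_cases huB : u ∈ B
        · exact ⟨u, Finset.mem_inter.2 ⟨hup, huB⟩⟩
        · obtain ⟨x, hx⟩ := hS u B hB (by
            intro s hs
            obtain ⟨x, hx⟩ := hhit s (Finset.mem_biUnion.2 ⟨u, hu, hs⟩)
            obtain ⟨hx1, hx2⟩ := Finset.mem_inter.1 hx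
            refine ⟨x, Finset.mem_inter.2 ⟨Finset.mem_erase.2 ⟨?_, hx1⟩, hx2⟩⟩
            rintro rfl
            exact huB hx2) p (Finset.mem_filter.2 ⟨hp, hup⟩)
          obtain ⟨hx1, hx2⟩ := Finset.mem_inter.1 hx
          exact ⟨x, Finset.mem_inter.2 ⟨(Finset.mem_erase.1 hx1).2, hx2⟩⟩

end Hit

section Scale

variable {G : SimpleGraph V} {w : Sym2 V → ℝ}

theorem scale [Fintype V] [Nonempty V] (hw : ∀ e, 0 ≤ w e) {h : ℕ} (hh : 2 ≤ h)
    (hminor : ¬ HasCompleteMinor G h) {ε r : ℝ} (hε : 0 < ε) (hr : 0 < r)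
    {a k K N : ℕ} (ha : a = (2 * ⌈36 * (h : ℝ) / ε⌉₊ + (h - 2)).choose (h - 2) *
        ((h - 1) * ⌊48 / ε + 4⌋₊)) (hK : K = k * (a * ⌊6 / ε + 2⌋₊))
    (hN1 : K + 1 ≤ N) (hN2 : K * a ≤ N) (P : Finset V) :
    ∃ S ⊆ P, S.card ≤ N ^ a ∧ ∀ X : Finset V, X.card ≤ k →
      (∀ s ∈ S, ∃ x ∈ X, WIn G w Set.univ s x r) →
      ∀ p ∈ P, ∃ x ∈ X, WIn G w Set.univ p x (r + ε * r / 3) := by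
  classical
  obtain ⟨H, rep, hHc, hH⟩ := hubs (G := G) hw hh hminor hε hr
  set δ : ℝ := ε * r / 6 with hδ
  have hδ0 : 0 < δ := by positivity
  let f : V → ℕ × ℕ × ℤ → ℕ := fun p z => ⌊dst G w Set.univ p (rep z) / δ⌋₊
  let A : V → Finset ((ℕ × ℕ × ℤ) × ℕ) := fun p =>
    ((H p).filter fun z => ∃ L, WIn G w Set.univ p (rep z) L).image fun z => (z, f p z)
  obtain ⟨S, hSP, hSc, hS⟩ := hit K N hN1 a hN2 P A (by
    intro p _
    refine Finset.card_image_le.trans ((Finset.card_filter_le _ _).trans ?_)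
    rw [ha]; exact hHc p)
  refine ⟨S, hSP, hSc, ?_⟩
  intro X hX hSX
  set m := ⌊6 / ε + 2⌋₊ with hm
  let B : Finset ((ℕ × ℕ × ℤ) × ℕ) := X.biUnion fun x => (H x).biUnion fun z =>
    ((Finset.range m).filter fun j : ℕ =>
      WIn G w Set.univ (rep z) x (r + ε * r / 6 - j * δ)).image fun j => (z, j)
  have hB : B.card ≤ K := by
    have h1 : B.card ≤ X.card * (a * m) := by
      refine Finset.card_biUnion_le_card_mul _ _ _ fun x _ => ?_
      have h2 : (H x).card ≤ a := by rw [ha]; exact hHc x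
      refine (Finset.card_biUnion_le_card_mul _ _ m fun z _ => ?_).trans
        (Nat.mul_le_mul_right _ h2)
      refine Finset.card_image_le.trans ((Finset.card_filter_le _ _).trans ?_)
      simp
    rw [hK]
    exact h1.trans (Nat.mul_le_mul_right _ hX)
  have hconc := hS B hB (by
    intro s hs
    obtain ⟨x, hx, hsx⟩ := hSX s hs
    obtain ⟨z, hz1, hz2, L1, L2, hL1, hL2, hL⟩ := hH s x hsx
    have hd := dst_le hw hL1
    have hd0 := (dst_win hw hL1).nonneg hw
    have hL20 := hL2.nonneg hw
    have hj : (f s z : ℝ) * δ ≤ dst G w Set.univ s (rep z) := by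
      rw [← le_div_iff₀ hδ0]
      exact Nat.floor_le (by positivity)
    refine ⟨(z, f s z), Finset.mem_inter.2 ⟨?_, ?_⟩⟩
    · exact Finset.mem_image.2 ⟨z, Finset.mem_filter.2 ⟨hz1, L1, hL1⟩, rfl⟩
    · refine Finset.mem_biUnion.2 ⟨x, hx, Finset.mem_biUnion.2 ⟨z, hz2, ?_⟩⟩
      refine Finset.mem_image.2 ⟨f s z, Finset.mem_filter.2 ⟨?_, ?_⟩, rfl⟩
      · rw [Finset.mem_range, hm, Nat.lt_iff_add_one_le]
        apply Nat.le_floor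
        have h1 : (f s z : ℝ) * δ ≤ r + ε * r / 6 := by linarith
        rw [← le_div_iff₀ hδ0] at h1
        have h2 : (r + ε * r / 6) / δ = 6 / ε + 1 := by rw [hδ]; field_simp
        push_cast
        linarith
      · exact hL2.mono le_rfl (by linarith))
  intro p hp
  obtain ⟨⟨z, j⟩, hzj⟩ := hconc p hp
  obtain ⟨hzA, hzB⟩ := Finset.mem_inter.1 hzj
  obtain ⟨z', hz', heq⟩ := Finset.mem_image.1 hzA
  obtain ⟨rfl, rfl⟩ := Prod.mk.inj heq
  obtain ⟨_, L, hL⟩ := Finset.mem_filter.1 hz'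
  obtain ⟨x, hx, hzB⟩ := Finset.mem_biUnion.1 hzB
  obtain ⟨z'', _, hzB⟩ := Finset.mem_biUnion.1 hzB
  obtain ⟨j, hj, heq'⟩ := Finset.mem_image.1 hzB
  obtain ⟨rfl, rfl⟩ := Prod.mk.inj heq'
  have hWx := (Finset.mem_filter.1 hj).2
  refine ⟨x, hx, ((dst_win hw hL).trans hWx).mono le_rfl ?_⟩
  have h1 : dst G w Set.univ p (rep z'') < (f p z'' + 1) * δ := by
    rw [← div_lt_iff₀ hδ0]
    exact Nat.lt_floor_add_one _
  have h2 : 2 * δ = ε * r / 3 := by rw [hδ]; ring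
  linarith

end Scale

section Bridge

variable {G : SimpleGraph V} {w : Sym2 V → ℝ≥0∞}

/-- edges of finite weight -/
def finG (G : SimpleGraph V) (w : Sym2 V → ℝ≥0∞) : SimpleGraph V where
  Adj u v := G.Adj u v ∧ w s(u, v) ≠ ⊤
  symm := ⟨fun u v h => ⟨h.1.symm, by rw [Sym2.eq_swap]; exact h.2⟩⟩
  loopless := ⟨fun v h => h.1.ne rfl⟩

/-- real weights -/
noncomputable def rw' (w : Sym2 V → ℝ≥0∞) : Sym2 V → ℝ := fun e => (w e).toReal

theorem rw'_nonneg (e : Sym2 V) : 0 ≤ rw' w e := ENNReal.toReal_nonneg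

theorem finG_minor {h : ℕ} (hm : ¬ HasCompleteMinor G h) : ¬ HasCompleteMinor (finG G w) h := by
  rintro ⟨B, h1, h2, h3⟩
  apply hm
  refine ⟨B, fun i => ?_, h2, fun i j hij => ?_⟩
  · refine (h1 i).mono ?_
    intro u v huv
    exact huv.1
  · obtain ⟨u, hu, v, hv, huv⟩ := h3 i j hij
    exact ⟨u, hu, v, hv, huv.1⟩

theorem walk_to {u v : V} (p : (finG G w).Walk u v) :
    ∃ q : G.Walk u v, walkWeight w q = ENNReal.ofReal (wt (rw' w) p) := by
  induction p with
  | nil => exact ⟨SimpleGraph.Walk.nil, by simp [walkWeight, wt]⟩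
  | cons hadj p ih =>
    obtain ⟨q, hq⟩ := ih
    refine ⟨SimpleGraph.Walk.cons hadj.1 q, ?_⟩
    rw [wt_cons, ENNReal.ofReal_add (rw'_nonneg _) (wt_nonneg rw'_nonneg p), ← hq, rw',
      ENNReal.ofReal_toReal hadj.2]
    simp [walkWeight]

theorem walk_from {u v : V} (q : G.Walk u v) (hq : walkWeight w q ≠ ⊤) :
    ∃ p : (finG G w).Walk u v, ENNReal.ofReal (wt (rw' w) p) = walkWeight w q := by
  induction q with
  | nil => exact ⟨SimpleGraph.Walk.nil, by simp [walkWeight, wt]⟩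
  | @cons a b c hadj q ih =>
    have h0 : walkWeight w (SimpleGraph.Walk.cons hadj q) = w s(a, b) + walkWeight w q := by
      simp [walkWeight]
    rw [h0] at hq ⊢
    rw [ENNReal.add_ne_top] at hq
    obtain ⟨p, hp⟩ := ih hq.2
    have hadj' : (finG G w).Adj a b := ⟨hadj, hq.1⟩
    refine ⟨SimpleGraph.Walk.cons hadj' p, ?_⟩
    rw [wt_cons, ENNReal.ofReal_add (rw'_nonneg _) (wt_nonneg rw'_nonneg p), hp, rw',
      ENNReal.ofReal_toReal hq.1]

theorem gdist_le_of_win {u v : V} {L : ℝ} (h : WIn (finG G w) (rw' w) Set.univ u v L) :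
    gdist G w u v ≤ ENNReal.ofReal L := by
  obtain ⟨p, _, hp⟩ := h
  obtain ⟨q, hq⟩ := walk_to p
  exact (iInf_le _ q).trans (hq.le.trans (ENNReal.ofReal_le_ofReal hp))

theorem win_of_gdist_le [Fintype V] {u v : V} {L : ℝ} (hL : 0 ≤ L)
    (h : gdist G w u v ≤ ENNReal.ofReal L) : WIn (finG G w) (rw' w) Set.univ u v L := by
  have hlt : gdist G w u v < ⊤ := h.trans_lt ENNReal.ofReal_lt_top
  obtain ⟨q, hq⟩ := iInf_lt_iff.1 hlt
  obtain ⟨p, hp⟩ := walk_from q hq.ne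
  have hp' : WIn (finG G w) (rw' w) Set.univ u v (wt (rw' w) p) :=
    ⟨p, fun _ _ => Set.mem_univ _, le_rfl⟩
  have hd := dst_win rw'_nonneg hp'
  refine hd.mono le_rfl ?_
  rw [← ENNReal.ofReal_le_ofReal_iff hL]
  refine le_trans (le_iInf fun q' => ?_) h
  by_cases hq' : walkWeight w q' = ⊤
  · rw [hq']; exact le_top
  · obtain ⟨p', hp'⟩ := walk_from q' hq'
    rw [← hp']
    apply ENNReal.ofReal_le_ofReal
    exact dst_le rw'_nonneg ⟨p', fun _ _ => Set.mem_univ _, le_rfl⟩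

theorem gdist_self (u : V) : gdist G w u u = 0 := by
  apply le_antisymm _ (zero_le)
  exact (iInf_le _ SimpleGraph.Walk.nil).trans (by simp [walkWeight])

theorem gdist_comm (u v : V) : gdist G w u v = gdist G w v u := by
  have aux : ∀ u v, gdist G w u v ≤ gdist G w v u := by
    intro u v
    refine le_iInf fun p => (iInf_le _ p.reverse).trans ?_
    simp [walkWeight, SimpleGraph.Walk.edges_reverse, List.sum_reverse]
  exact le_antisymm (aux _ _) (aux _ _)

theorem gdist_tri (u v x : V) : gdist G w u x ≤ gdist G w u v + gdist G w v x := by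
  unfold gdist
  rw [ENNReal.iInf_add]
  refine le_iInf fun p => ?_
  rw [ENNReal.add_iInf]
  refine le_iInf fun q => (iInf_le _ (p.append q)).trans ?_
  simp [walkWeight, SimpleGraph.Walk.edges_append]

theorem pdist_le {u x : V} {X : Set V} (hx : x ∈ X) : pdist G w u X ≤ gdist G w u x :=
  iInf₂_le x hx

theorem pdist_attained [Fintype V] (u : V) {X : Set V} (hX : X.Nonempty) :
    ∃ x ∈ X, gdist G w u x = pdist G w u X := by
  obtain ⟨x, hx, hmin⟩ := Set.exists_min_image X (gdist G w u) (Set.toFinite X) hX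
  exact ⟨x, hx, le_antisymm (le_iInf₂ hmin) (pdist_le hx)⟩

theorem pdist_tri (u v : V) (X : Set V) : pdist G w u X ≤ gdist G w u v + pdist G w v X := by
  unfold pdist
  simp only [ENNReal.add_iInf]
  refine le_iInf₂ fun x hx => (iInf₂_le x hx).trans (gdist_tri u v x)

theorem pdist_anti (u : V) {X Y : Set V} (h : X ⊆ Y) : pdist G w u Y ≤ pdist G w u X :=
  biInf_mono h

theorem gonzalez [Fintype V] [DecidableEq V] (G : SimpleGraph V) (w : Sym2 V → ℝ≥0∞)
    {P : Finset V} (hP : P.Nonempty) (k : ℕ) :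
    ∃ Q ⊆ P, ∃ q ∈ P, Q.Nonempty ∧ Q.card ≤ k + 1 ∧
      (∀ p ∈ P, pdist G w p Q ≤ pdist G w q Q) ∧
      (pdist G w q Q = 0 ∨ (Q.card = k + 1 ∧
        ∀ x ∈ Q, ∀ y ∈ Q, x ≠ y → pdist G w q Q ≤ gdist G w x y)) := by
  induction k with
  | zero =>
    obtain ⟨p0, hp0⟩ := hP
    obtain ⟨q, hq, hmax⟩ := P.exists_max_image (fun p => pdist G w p ({p0} : Finset V)) ⟨p0, hp0⟩
    refine ⟨{p0}, by simpa using hp0, q, hq, by simp, by simp, hmax, Or.inr ⟨by simp, ?_⟩⟩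
    intro x hx y hy hxy
    simp at hx hy
    exact absurd (hx.trans hy.symm) hxy
  | succ k ih =>
    obtain ⟨Q, hQP, q, hq, hQn, hQc, hmax, hor⟩ := ih
    by_cases h0 : pdist G w q Q = 0
    · exact ⟨Q, hQP, q, hq, hQn, by omega, hmax, Or.inl h0⟩
    obtain ⟨hc, hpair⟩ := hor.resolve_left h0
    have hqQ : q ∉ Q := by
      intro hcon
      apply h0
      apply le_antisymm _ zero_le
      exact (pdist_le (Finset.mem_coe.2 hcon)).trans (gdist_self q).le
    obtain ⟨q', hq', hmax'⟩ := P.exists_max_image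
      (fun p => pdist G w p (insert q Q : Finset V)) hP
    have hle : pdist G w q' (insert q Q : Finset V) ≤ pdist G w q Q :=
      (pdist_anti q' (by simp)).trans (hmax q' hq')
    refine ⟨insert q Q, Finset.insert_subset hq hQP, q', hq', by simp, ?_, hmax', Or.inr ⟨?_, ?_⟩⟩
    · rw [Finset.card_insert_of_notMem hqQ, hc]
    · rw [Finset.card_insert_of_notMem hqQ, hc]
    · intro x hx y hy hxy
      refine hle.trans ?_
      rcases Finset.mem_insert.1 hx with rfl | hx1 <;> rcases Finset.mem_insert.1 hy with rfl | hy1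
      · exact absurd rfl hxy
      · exact pdist_le (Finset.mem_coe.2 hy1)
      · rw [gdist_comm]; exact pdist_le (Finset.mem_coe.2 hx1)
      · exact hpair x hx1 y hy1 hxy

end Bridge

section Numeric

theorem numeric {h k a K : ℕ} (hh : 2 ≤ h) (hk : 1 ≤ k) {ε c Γ : ℝ} (hε0 : 0 < ε) (hε1 : ε < 1)
    (hc : c = ((h - 2 + 2 * ⌈36 * (h : ℝ) / ε⌉₊).choose (h - 1) : ℝ) *
      (12 + 72 / ε) * ((h : ℝ) - 1))
    (hΓ : Γ = 3 * (c + 1) * (2 * (k : ℝ) + c * (4 + 3 / ε + 2 * (k : ℝ))))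
    (ha : a = (2 * ⌈36 * (h : ℝ) / ε⌉₊ + (h - 2)).choose (h - 2) *
        ((h - 1) * ⌊48 / ε + 4⌋₊)) (hK : K = k * (a * ⌊6 / ε + 2⌋₊)) :
    (k : ℝ) + 1 + (⌈8 / ε ^ 2⌉₊ + 1) * (((K + 1) * (a + 1) : ℕ) : ℝ) ^ a ≤ (k : ℝ) +
        9 / ε ^ 3 * (2 * c * (Γ * (k : ℝ) + 2) * (3 / ε + 2) ^ c) ^ (c + 1) := by
  have hinv : 1 < 1 / ε := by rw [lt_div_iff₀ hε0]; linarith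
  have h3 : 3 / ε = 3 * (1 / ε) := by ring
  have h48 : 48 / ε = 48 * (1 / ε) := by ring
  have h72 : 72 / ε = 72 * (1 / ε) := by ring
  have h6 : 6 / ε = 6 * (1 / ε) := by ring
  have hh1 : (1 : ℝ) ≤ (h : ℝ) - 1 := by
    have : (2 : ℝ) ≤ h := by exact_mod_cast hh
    linarith
  have hk1 : (1 : ℝ) ≤ k := by exact_mod_cast hk
  set M := ⌈36 * (h : ℝ) / ε⌉₊ with hM
  have hMh : h ≤ M := by
    have h1 : 36 * (h : ℝ) / ε ≤ M := Nat.le_ceil _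
    have h2 : (h : ℝ) ≤ 36 * (h : ℝ) / ε := by
      rw [le_div_iff₀ hε0]; nlinarith
    exact_mod_cast h2.trans h1
  have hch : (2 * M + (h - 2)).choose (h - 2) ≤ (h - 2 + 2 * M).choose (h - 1) := by
    rw [add_comm (2 * M), show h - 1 = (h - 2) + 1 by omega]
    apply Nat.choose_le_succ_of_lt_half_left
    omega
  have hch1 : 1 ≤ (h - 2 + 2 * M).choose (h - 1) := Nat.choose_pos (by omega)
  set C1 := (h - 2 + 2 * M).choose (h - 1) with hC1
  have hch1' : (1 : ℝ) ≤ (C1 : ℝ) := by exact_mod_cast hch1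
  have hc84 : 84 ≤ c := by
    rw [hc]
    calc (84 : ℝ) = 1 * 84 * 1 := by norm_num
      _ ≤ (C1 : ℝ) * (12 + 72 / ε) * ((h : ℝ) - 1) := by
        gcongr
        linarith
  have hac : (a : ℝ) ≤ c := by
    rw [hc, ha]
    push_cast
    rw [Nat.cast_sub (by omega : 1 ≤ h)]
    have h1 : ((2 * M + (h - 2)).choose (h - 2) : ℝ) ≤ C1 := by exact_mod_cast hch
    have h2 : (⌊48 / ε + 4⌋₊ : ℝ) ≤ 12 + 72 / ε :=
      (Nat.floor_le (by positivity)).trans (by linarith)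
    calc ((2 * M + (h - 2)).choose (h - 2) : ℝ) * (((h : ℝ) - (1 : ℕ)) * ⌊48 / ε + 4⌋₊)
        ≤ C1 * (((h : ℝ) - (1 : ℕ)) * (12 + 72 / ε)) := by
          push_cast
          gcongr
      _ = _ := by push_cast; ring
  have hΓc : 2 * c ≤ Γ := by
    have : 3 * (c + 1) * 2 ≤ Γ := by
      rw [hΓ]
      gcongr
      have : 0 ≤ c * (4 + 3 / ε + 2 * (k : ℝ)) := by positivity
      linarith
    linarith
  set Q : ℝ := 2 * c * (Γ * (k : ℝ) + 2) * (3 / ε + 2) ^ c with hQ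
  have hpow : 3 / ε + 2 ≤ (3 / ε + 2) ^ c := by
    have := Real.rpow_le_rpow_of_exponent_le (x := 3 / ε + 2) (by linarith)
      (show (1 : ℝ) ≤ c by linarith)
    simpa using this
  have hKle : (K : ℝ) + 1 ≤ (Γ * k + 2) * (3 / ε + 2) := by
    have h1 : (K : ℝ) ≤ k * (c * (6 / ε + 2)) := by
      rw [hK]; push_cast
      have : (⌊6 / ε + 2⌋₊ : ℝ) ≤ 6 / ε + 2 := Nat.floor_le (by positivity)
      gcongr
    have h2 : (2 * c) * k * (3 / ε + 2) ≤ Γ * k * (3 / ε + 2) := by gcongr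
    have h4 : k * (c * (6 / ε + 2)) ≤ (2 * c) * k * (3 / ε + 2) := by
      have : 0 ≤ k * c := by positivity
      rw [h6, h3]; nlinarith
    have : (Γ * k + 2) * (3 / ε + 2) = Γ * k * (3 / ε + 2) + 2 * (3 / ε + 2) := by ring
    linarith
  have hΓ0 : 0 ≤ Γ * k := by
    apply mul_nonneg <;> linarith
  have hpre : 0 ≤ 2 * c * (Γ * k + 2) := by
    apply mul_nonneg <;> linarith
  have ha2c : (a : ℝ) + 1 ≤ 2 * c := by linarith
  have hΓ2 : 0 ≤ (Γ * k + 2) * (3 / ε + 2) := by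
    apply mul_nonneg
    · linarith
    · positivity
  have hNQ : (((K + 1) * (a + 1) : ℕ) : ℝ) ≤ Q := by
    push_cast
    calc ((K : ℝ) + 1) * (a + 1) ≤ ((Γ * k + 2) * (3 / ε + 2)) * (2 * c) := by
          gcongr
      _ = 2 * c * (Γ * k + 2) * (3 / ε + 2) := by ring
      _ ≤ Q := by
        rw [hQ]
        gcongr
  have hQ2 : 2 ≤ Q := by
    calc (2 : ℝ) ≤ (2 * 1) * (0 + 2) * (0 + 2) := by norm_num
      _ ≤ (2 * c) * (Γ * k + 2) * (3 / ε + 2) := by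
        gcongr
        · linarith
        · positivity
      _ ≤ Q := by rw [hQ]; gcongr
  have hNa : (((K + 1) * (a + 1) : ℕ) : ℝ) ^ a ≤ Q ^ c := by
    calc (((K + 1) * (a + 1) : ℕ) : ℝ) ^ a ≤ Q ^ a := by gcongr
      _ = Q ^ (a : ℝ) := (Real.rpow_natCast _ _).symm
      _ ≤ Q ^ c := Real.rpow_le_rpow_of_exponent_le (by linarith) hac
  have hQc : 1 ≤ Q ^ c := Real.one_le_rpow (by linarith) (by linarith)
  have hQc1 : Q ^ (c + 1) = Q ^ c * Q := by
    rw [Real.rpow_add (by linarith), Real.rpow_one]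
  have hceil : (⌈8 / ε ^ 2⌉₊ : ℝ) ≤ 8 / ε ^ 2 + 1 := (Nat.ceil_lt_add_one (by positivity)).le
  have he2 : 8 / ε ^ 2 + 3 ≤ 9 / ε ^ 3 * 2 := by
    rw [show 8 / ε ^ 2 = 8 * (1 / ε) ^ 2 by field_simp,
      show 9 / ε ^ 3 = 9 * (1 / ε) ^ 3 by field_simp]
    have h1 : (1 / ε) ^ 2 ≤ (1 / ε) ^ 3 := pow_le_pow_right₀ hinv.le (by norm_num)
    have h2 : 1 ≤ (1 / ε) ^ 3 := one_le_pow₀ hinv.le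
    linarith
  rw [hQc1]
  have hQc0 : 0 ≤ Q ^ c := by linarith
  have hfin : 1 + (⌈8 / ε ^ 2⌉₊ + 1) * (((K + 1) * (a + 1) : ℕ) : ℝ) ^ a
      ≤ 9 / ε ^ 3 * (Q ^ c * Q) := by
    calc 1 + (⌈8 / ε ^ 2⌉₊ + 1) * (((K + 1) * (a + 1) : ℕ) : ℝ) ^ a
        ≤ Q ^ c + (8 / ε ^ 2 + 1 + 1) * Q ^ c := by gcongr
      _ = (8 / ε ^ 2 + 3) * Q ^ c := by ring
      _ ≤ (9 / ε ^ 3 * 2) * Q ^ c := by gcongr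
      _ ≤ (9 / ε ^ 3 * Q) * Q ^ c := by gcongr
      _ = _ := by ring
  linarith

end Numeric

theorem minor_one (G : SimpleGraph V) (v : V) : HasCompleteMinor G 1 := by
  refine ⟨fun _ => {v}, fun i => ?_, fun i j hij => absurd (Subsingleton.elim i j) hij,
    fun i j hij => absurd (Subsingleton.elim i j) hij⟩
  have : Nonempty ({v} : Set V) := ⟨⟨v, rfl⟩⟩
  refine ⟨?_⟩
  rintro ⟨a, ha⟩ ⟨b, hb⟩
  have ha' : a = v := ha
  have hb' : b = v := hb
  subst ha'
  subst hb'
  exact SimpleGraph.Reachable.refl _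

set_option maxHeartbeats 2000000 in
theorem main_aux {V : Type} [Fintype V] (h : ℕ) (hh2 : 2 ≤ h) (k : ℕ) (hk : 1 ≤ k)
    (G : SimpleGraph V) (w : Sym2 V → ℝ≥0∞) (hminor : ¬ HasCompleteMinor G h)
    (P F : Set V) (hP : P.Nonempty)
    (ε : ℝ) (hε0 : 0 < ε) (hε1 : ε < 1) (a K N : ℕ)
    (ha : a = (2 * ⌈36 * (h : ℝ) / ε⌉₊ + (h - 2)).choose (h - 2) *
        ((h - 1) * ⌊48 / ε + 4⌋₊)) (hK : K = k * (a * ⌊6 / ε + 2⌋₊))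
    (hN : N = (K + 1) * (a + 1)) :
    ∃ S : Set V, S ⊆ P ∧ S.ncard ≤ k + 1 + (⌈8 / ε ^ 2⌉₊ + 1) * N ^ a ∧
      ∀ X : Set V, X ⊆ F → X.Nonempty → X.ncard ≤ k →
        ∀ q ∈ P, pdist G w q X ≤ ENNReal.ofReal (1 + ε) * ⨆ s ∈ S, pdist G w s X := by
  classical
  obtain ⟨p0, hp0⟩ := hP
  have hV : Nonempty V := ⟨p0⟩
  set PF : Finset V := P.toFinite.toFinset with hPF
  have hPFm : ∀ v, v ∈ PF ↔ v ∈ P := fun v => Set.Finite.mem_toFinset _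
  obtain ⟨Q, hQP, q, hq, hQn, hQc, hmax, hor⟩ :=
    gonzalez G w (P := PF) ⟨p0, (hPFm p0).2 hp0⟩ (k - 1)
  set R := pdist G w q Q with hR
  have hsc : ∀ r : ℝ, ∃ S ⊆ PF, S.card ≤ N ^ a ∧ (0 < r → ∀ X : Finset V, X.card ≤ k →
      (∀ s ∈ S, ∃ x ∈ X, WIn (finG G w) (rw' w) Set.univ s x r) →
      ∀ p ∈ PF, ∃ x ∈ X, WIn (finG G w) (rw' w) Set.univ p x (r + ε * r / 3)) := by
    intro r
    by_cases hr : 0 < r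
    · obtain ⟨S, h1, h2, h3⟩ := scale (G := finG G w) (w := rw' w) rw'_nonneg hh2
        (finG_minor hminor) hε0 hr ha hK (N := N) (by rw [hN]; nlinarith)
        (by rw [hN]; nlinarith) PF
      exact ⟨S, h1, h2, fun _ => h3⟩
    · exact ⟨∅, by simp, by simp, fun h => absurd h hr⟩
  choose Sc hScP hScc hSc using hsc
  set rl : ℕ → ℝ := fun l => R.toReal / 2 * (1 + l * ε / 4) with hrl
  set S : Finset V := insert q Q ∪ (Finset.range (⌈8 / ε ^ 2⌉₊ + 1)).biUnion fun l => Sc (rl l)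
    with hS
  have hSP : S ⊆ PF := by
    refine Finset.union_subset (Finset.insert_subset hq hQP) ?_
    intro s hs
    obtain ⟨l, _, hs⟩ := Finset.mem_biUnion.1 hs
    exact hScP _ hs
  have hScard : S.card ≤ k + 1 + (⌈8 / ε ^ 2⌉₊ + 1) * N ^ a := by
    refine (Finset.card_union_le _ _).trans (Nat.add_le_add ?_ ?_)
    · have := Finset.card_insert_le q Q
      omega
    · refine (Finset.card_biUnion_le_card_mul _ _ (N ^ a) fun l _ => hScc _).trans ?_
      simp
  refine ⟨(S : Set V), fun s hs => (hPFm s).1 (hSP hs), ?_, ?_⟩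
  · rw [Set.ncard_coe_finset]
    exact hScard
  intro X _ hXn hXc p hp
  have hpF := (hPFm p).2 hp
  set D := ⨆ s ∈ (S : Set V), pdist G w s X with hD
  have hDs : ∀ s ∈ S, pdist G w s X ≤ D := fun s hs =>
    le_iSup₂ (f := fun s (_ : s ∈ (S : Set V)) => pdist G w s X) s (Finset.mem_coe.2 hs)
  have hpRD : pdist G w p X ≤ R + D := by
    obtain ⟨s, hs, hps⟩ := pdist_attained (G := G) (w := w) p (X := (Q : Set V)) hQn
    refine (pdist_tri p s X).trans (add_le_add ?_ (hDs s ?_))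
    · rw [hps]; exact hmax p hpF
    · exact Finset.mem_union_left _ (Finset.mem_insert_of_mem hs)
  have h1D : D ≤ ENNReal.ofReal (1 + ε) * D := by
    have : (1 : ℝ≥0∞) ≤ ENNReal.ofReal (1 + ε) := by
      rw [ENNReal.one_le_ofReal]; linarith
    calc D = 1 * D := (one_mul D).symm
      _ ≤ _ := by gcongr
  rcases hor with hR0 | ⟨hQk, hpair⟩
  · have hR0' : R = 0 := hR0
    rw [hR0', zero_add] at hpRD
    exact hpRD.trans h1D
  by_cases hR0 : R = 0
  · rw [hR0, zero_add] at hpRD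
    exact hpRD.trans h1D
  by_cases hDt : D = ⊤
  · rw [hDt] at h1D ⊢
    exact le_top.trans h1D
  -- pigeonhole
  have hqQ : q ∉ Q := by
    intro hcon
    apply hR0
    apply le_antisymm _ zero_le
    exact (pdist_le (Finset.mem_coe.2 hcon)).trans (gdist_self q).le
  have hR2D : R ≤ D + D := by
    have hf : ∀ s : V, ∃ x ∈ X, gdist G w s x = pdist G w s X := fun s => pdist_attained s hXn
    choose f hfX hf using hf
    have hcard : (X.toFinite.toFinset).card < (insert q Q).card := by
      rw [Finset.card_insert_of_notMem hqQ, hQk, ← Set.ncard_eq_toFinset_card]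
      omega
    obtain ⟨s, hs, t, ht, hst, hfst⟩ := Finset.exists_ne_map_eq_of_card_lt_of_maps_to hcard
      (f := f) (fun s _ => by simpa using hfX s)
    have hRst : R ≤ gdist G w s t := by
      rcases Finset.mem_insert.1 hs with rfl | hs1 <;> rcases Finset.mem_insert.1 ht with rfl | ht1
      · exact absurd rfl hst
      · exact pdist_le (Finset.mem_coe.2 ht1)
      · rw [gdist_comm]; exact pdist_le (Finset.mem_coe.2 hs1)
      · exact hpair s hs1 t ht1 hst
    refine hRst.trans ((gdist_tri s (f s) t).trans (add_le_add ?_ ?_))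
    · rw [hf]; exact hDs s (Finset.mem_union_left _ hs)
    · rw [gdist_comm, hfst, hf]; exact hDs t (Finset.mem_union_left _ ht)
  have hRt : R ≠ ⊤ := ne_top_of_le_ne_top (ENNReal.add_ne_top.2 ⟨hDt, hDt⟩) hR2D
  obtain ⟨D', hD'⟩ : ∃ D', D' = D.toReal := ⟨_, rfl⟩
  obtain ⟨R', hR'⟩ : ∃ R', R' = R.toReal := ⟨_, rfl⟩
  have hDo : D = ENNReal.ofReal D' := by rw [hD', ENNReal.ofReal_toReal hDt]
  have hRo : R = ENNReal.ofReal R' := by rw [hR', ENNReal.ofReal_toReal hRt]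
  have hR'0 : 0 < R' := by rw [hR']; exact ENNReal.toReal_pos hR0 hRt
  have hD'0 : 0 ≤ D' := by rw [hD']; exact ENNReal.toReal_nonneg
  have hRD' : R' ≤ 2 * D' := by
    rw [hRo, hDo, ← ENNReal.ofReal_add hD'0 hD'0, ENNReal.ofReal_le_ofReal_iff (by linarith)]
      at hR2D
    linarith
  have hgoal : ENNReal.ofReal (1 + ε) * D = ENNReal.ofReal ((1 + ε) * D') := by
    rw [hDo, ENNReal.ofReal_mul (by linarith)]
  rw [hgoal]
  by_cases hbig : R' ≤ ε * D'
  · refine hpRD.trans ?_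
    rw [hRo, hDo, ← ENNReal.ofReal_add hR'0.le hD'0]
    apply ENNReal.ofReal_le_ofReal
    linarith
  push Not at hbig
  set l := ⌈(2 * D' / R' - 1) * (4 / ε)⌉₊ with hl
  have hx0 : 0 ≤ (2 * D' / R' - 1) * (4 / ε) := by
    apply mul_nonneg _ (by positivity)
    rw [sub_nonneg, le_div_iff₀ hR'0]; linarith
  have hl1 : (2 * D' / R' - 1) * (4 / ε) ≤ l := Nat.le_ceil _
  have hl2 : (l : ℝ) < (2 * D' / R' - 1) * (4 / ε) + 1 := Nat.ceil_lt_add_one hx0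
  have hlr : l ∈ Finset.range (⌈8 / ε ^ 2⌉₊ + 1) := by
    rw [Finset.mem_range, Nat.lt_succ_iff]
    apply Nat.ceil_le_ceil
    have h1 : D' / R' ≤ 1 / ε := by
      rw [div_le_div_iff₀ hR'0 hε0]; linarith
    have h2 : (2 * D' / R' - 1) ≤ 2 / ε := by
      have h3 : 2 * D' / R' = 2 * (D' / R') := by ring
      have h4 : 2 / ε = 2 * (1 / ε) := by ring
      linarith
    calc (2 * D' / R' - 1) * (4 / ε) ≤ 2 / ε * (4 / ε) := by gcongr
      _ = 8 / ε ^ 2 := by field_simp; norm_num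
  have hrl' : rl l = R' / 2 + R' * ε / 8 * l := by
    simp only [hrl, ← hR']; ring
  have hkey : R' * ε / 8 * ((2 * D' / R' - 1) * (4 / ε)) = D' - R' / 2 := by
    field_simp
    ring
  have hc0 : 0 < R' * ε / 8 := by positivity
  have hrD : D' ≤ rl l := by
    have := mul_le_mul_of_nonneg_left hl1 hc0.le
    rw [hrl']; linarith
  have hrU : rl l ≤ D' * (1 + ε / 4) := by
    have := mul_le_mul_of_nonneg_left hl2.le hc0.le
    rw [hrl']
    nlinarith
  have hr0 : 0 < rl l := by linarith
  have hXF : X.toFinite.toFinset.card ≤ k := by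
    rw [← Set.ncard_eq_toFinset_card]; exact hXc
  obtain ⟨x, hx, hW⟩ := hSc (rl l) hr0 X.toFinite.toFinset hXF (by
    intro s hs
    obtain ⟨x, hx, hsx⟩ := pdist_attained (G := G) (w := w) s hXn
    refine ⟨x, by simpa using hx, win_of_gdist_le hr0.le ?_⟩
    rw [hsx]
    refine (hDs s (Finset.mem_union_right _ (Finset.mem_biUnion.2 ⟨l, hlr, hs⟩))).trans ?_
    rw [hDo]
    exact ENNReal.ofReal_le_ofReal hrD) p hpF
  have hxX : x ∈ X := by simpa using hx
  refine (pdist_le hxX).trans ((gdist_le_of_win hW).trans (ENNReal.ofReal_le_ofReal ?_))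
  calc rl l + ε * rl l / 3 = rl l * (1 + ε / 3) := by ring
    _ ≤ (D' * (1 + ε / 4)) * (1 + ε / 3) := by gcongr
    _ ≤ (1 + ε) * D' := by
      have : (1 + ε / 4) * (1 + ε / 3) ≤ 1 + ε := by nlinarith
      nlinarith

theorem stmt_13 {V : Type} [Fintype V] (h : ℕ) (hh : 1 ≤ h) (k : ℕ) (hk : 1 ≤ k)
    (G : SimpleGraph V) (w : Sym2 V → ℝ≥0∞) (hminor : ¬ HasCompleteMinor G h)
    (P F : Set V) (hP : P.Nonempty)
    (ε : ℝ) (hε0 : 0 < ε) (hε1 : ε < 1)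
    (c Γ : ℝ)
    (hc : c = ((h - 2 + 2 * ⌈36 * (h : ℝ) / ε⌉₊).choose (h - 1) : ℝ) *
      (12 + 72 / ε) * ((h : ℝ) - 1))
    (hΓ : Γ = 3 * (c + 1) * (2 * (k : ℝ) + c * (4 + 3 / ε + 2 * (k : ℝ)))) :
    ∃ S : Set V, S ⊆ P ∧
      (S.ncard : ℝ) ≤ (k : ℝ) +
        9 / ε ^ 3 * (2 * c * (Γ * (k : ℝ) + 2) * (3 / ε + 2) ^ c) ^ (c + 1) ∧
      ∀ X : Set V, X ⊆ F → X.Nonempty → X.ncard ≤ k →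
        ∀ q ∈ P, pdist G w q X ≤ ENNReal.ofReal (1 + ε) * ⨆ s ∈ S, pdist G w s X := by
  classical
  obtain ⟨p0, hp0⟩ := hP
  have hV : Nonempty V := ⟨p0⟩
  have hh2 : 2 ≤ h := by
    by_contra hcon
    have : h = 1 := by omega
    subst this
    exact hminor (minor_one G p0)
  obtain ⟨a, ha⟩ : ∃ a, a = (2 * ⌈36 * (h : ℝ) / ε⌉₊ + (h - 2)).choose (h - 2) *
        ((h - 1) * ⌊48 / ε + 4⌋₊) := ⟨_, rfl⟩
  obtain ⟨K, hK⟩ : ∃ K, K = k * (a * ⌊6 / ε + 2⌋₊) := ⟨_, rfl⟩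
  obtain ⟨N, hN⟩ : ∃ N, N = (K + 1) * (a + 1) := ⟨_, rfl⟩
  have hnum := numeric hh2 hk hε0 hε1 hc hΓ ha hK
  rw [← hN] at hnum
  obtain ⟨S, h1, h2, h3⟩ := main_aux h hh2 k hk G w hminor P F ⟨p0, hp0⟩ ε hε0 hε1 a K N ha hK hN
  refine ⟨S, h1, le_trans ?_ hnum, h3⟩
  have h2' : (S.ncard : ℝ) ≤ ((k + 1 + (⌈8 / ε ^ 2⌉₊ + 1) * N ^ a : ℕ) : ℝ) := Nat.cast_le.2 h2
  refine h2'.trans (le_of_eq ?_)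
  push_cast
  ring

end ScatterDim
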